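/- arXiv:2006.15221 — 3 statements merged into one kernel-verified Lean document; each statement's English description precedes it below -/
import Mathlib

section
/- Let (G,K) be a connected finite weighted graph, let φ : G → ℝ satisfy Σ_g φ(g) = 0, and let S : G × G → [0,∞) be symmetric and strictly positive whenever K(g,g') > 0. Then there exists a unique η : G → ℝ with Σ_g η(g) = 0 solving the graph PDE div_g(∇_g η · S) = φ, where (∇_g η · S)(g,g') := (η(g') − η(g)) S(g,g'). Moreover Σ_{g,g'} |η(g') − η(g)|² S(g,g') K(g,g') ≤ (1/λ_S) Σ_g |φ(g)|², where λ_S is the first nonzero eigenvalue of the matrix L_S with entries L_S(g,g') = 1_{g=g'} Σ_{g''} 2 S(g,g'') K(g,g'') − 2 S(g,g') K(g,g'). -/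
/-!
The PDE reads `L_S η = -φ`. Symmetrizing the double sum gives `⟨v, L_S v⟩ = Σ (v g' - v g)² S K`,
so `L_S` is symmetric and positive semidefinite, and by connectivity its kernel consists of the
constant functions. Hence `v ↦ L_S v + (Σ v) 1` is injective, so bijective, which gives existence
and uniqueness on mean-zero functions. In an orthonormal eigenbasis of `L_S` every eigenvalue `μ`
satisfies `λ_S μ ≤ μ²`, hence `λ_S ⟨η, L_S η⟩ ≤ ‖L_S η‖² = ‖φ‖²`, which is the energy bound.
-/

/-- The graph Laplacian-type matrix `L_S` with entries
`L_S(g,g') = 1_{g=g'} Σ_{g''} 2 S(g,g'') K(g,g'') − 2 S(g,g') K(g,g')`. -/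
noncomputable def graphLaplacian {G : Type*} [Fintype G] [DecidableEq G]
    (K S : G → G → ℝ) : Matrix G G ℝ :=
  Matrix.of fun g g' =>
    (if g = g' then ∑ g'', 2 * S g g'' * K g g'' else 0) - 2 * S g g' * K g g'

/-- The first nonzero eigenvalue of `L_S` (the smallest eigenvalue different from zero). -/
noncomputable def firstNonzeroEigenvalue {G : Type*} [Fintype G] [DecidableEq G]
    (K S : G → G → ℝ) : ℝ :=
  sInf {t : ℝ | t ≠ 0 ∧ ∃ v : G → ℝ, v ≠ 0 ∧ (graphLaplacian K S).mulVec v = t • v}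

lemma graphLaplacian_mulVec {G : Type*} [Fintype G] [DecidableEq G]
    (K S : G → G → ℝ) (v : G → ℝ) (g : G) :
    (graphLaplacian K S).mulVec v g = ∑ g', 2 * S g g' * K g g' * (v g - v g') := by
  simp only [graphLaplacian, Matrix.mulVec, dotProduct, Matrix.of_apply, sub_mul, mul_sub,
    Finset.sum_sub_distrib, ite_mul, zero_mul, Finset.sum_ite_eq, Finset.mem_univ, if_true,
    Finset.sum_mul]

/-- The left side of the graph PDE is `-L_S η`. -/
lemma graph_div_grad_eq {G : Type*} [Fintype G] [DecidableEq G]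
    (K S : G → G → ℝ) (hSsym : ∀ g g', S g g' = S g' g) (v : G → ℝ) (g : G) :
    ∑ g', ((v g' - v g) * S g g' - (v g - v g') * S g' g) * K g g'
      = -(graphLaplacian K S).mulVec v g := by
  rw [graphLaplacian_mulVec, ← Finset.sum_neg_distrib]
  refine Finset.sum_congr rfl fun g' _ => ?_
  rw [hSsym g' g]
  ring

lemma graphLaplacian_sum_mulVec {G : Type*} [Fintype G] [DecidableEq G]
    (K S : G → G → ℝ) (hKsym : ∀ g g', K g g' = K g' g) (hSsym : ∀ g g', S g g' = S g' g)
    (v : G → ℝ) : ∑ g, (graphLaplacian K S).mulVec v g = 0 := by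
  simp only [graphLaplacian_mulVec]
  have h : ∑ g, ∑ g', 2 * S g g' * K g g' * (v g - v g')
      = ∑ g, ∑ g', -(2 * S g g' * K g g' * (v g - v g')) := by
    rw [Finset.sum_comm]
    refine Finset.sum_congr rfl fun g _ => Finset.sum_congr rfl fun g' _ => ?_
    rw [hSsym g' g, hKsym g' g]
    ring
  simp only [Finset.sum_neg_distrib] at h
  linarith

lemma graphLaplacian_energy {G : Type*} [Fintype G] [DecidableEq G]
    (K S : G → G → ℝ) (hKsym : ∀ g g', K g g' = K g' g) (hSsym : ∀ g g', S g g' = S g' g)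
    (v : G → ℝ) :
    ∑ g, ∑ g', (v g' - v g) ^ 2 * S g g' * K g g'
      = ∑ g, v g * (graphLaplacian K S).mulVec v g := by
  simp only [graphLaplacian_mulVec, Finset.mul_sum]
  have h : ∑ g, ∑ g', v g * (2 * S g g' * K g g' * (v g - v g'))
      = ∑ g, ∑ g', v g' * (2 * S g g' * K g g' * (v g' - v g)) := by
    rw [Finset.sum_comm]
    refine Finset.sum_congr rfl fun g _ => Finset.sum_congr rfl fun g' _ => ?_
    rw [hSsym g' g, hKsym g' g]
  have h2 : 2 * ∑ g, ∑ g', (v g' - v g) ^ 2 * S g g' * K g g'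
      = ∑ g, ∑ g', v g * (2 * S g g' * K g g' * (v g - v g'))
        + ∑ g, ∑ g', v g' * (2 * S g g' * K g g' * (v g' - v g)) := by
    simp only [Finset.mul_sum, ← Finset.sum_add_distrib]
    refine Finset.sum_congr rfl fun g _ => Finset.sum_congr rfl fun g' _ => ?_
    ring
  linarith

lemma graphLaplacian_isHermitian {G : Type*} [Fintype G] [DecidableEq G]
    (K S : G → G → ℝ) (hKsym : ∀ g g', K g g' = K g' g) (hSsym : ∀ g g', S g g' = S g' g) :
    (graphLaplacian K S).IsHermitian := by
  ext g g'
  simp only [graphLaplacian, Matrix.conjTranspose_apply, Matrix.of_apply, star_trivial,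
    hSsym g' g, hKsym g' g]
  by_cases h : g = g'
  · subst h; rfl
  · simp [h, Ne.symm h]

/-- A mean-zero function in the kernel of `L_S` has zero energy, so it is constant along edges,
hence constant by connectivity, hence zero. -/
lemma graphLaplacian_ker {G : Type*} [Fintype G] [DecidableEq G]
    (K S : G → G → ℝ)
    (hK0 : ∀ g g', 0 ≤ K g g') (hKsym : ∀ g g', K g g' = K g' g)
    (hconn : ∀ g g' : G, Relation.ReflTransGen (fun a b => 0 < K a b) g g')
    (hS0 : ∀ g g', 0 ≤ S g g') (hSsym : ∀ g g', S g g' = S g' g)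
    (hSpos : ∀ g g', 0 < K g g' → 0 < S g g') (v : G → ℝ) (hsum : ∑ g, v g = 0)
    (hv : (graphLaplacian K S).mulVec v = 0) : v = 0 := by
  have hE := graphLaplacian_energy K S hKsym hSsym v
  have hnn : ∀ g g', 0 ≤ (v g' - v g) ^ 2 * S g g' * K g g' := fun g g' =>
    mul_nonneg (mul_nonneg (sq_nonneg _) (hS0 _ _)) (hK0 _ _)
  simp only [hv, Pi.zero_apply, mul_zero, Finset.sum_const_zero] at hE
  rw [Finset.sum_eq_zero_iff_of_nonneg
    (fun g _ => Finset.sum_nonneg fun g' _ => hnn g g')] at hE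
  have hedge : ∀ a b, 0 < K a b → v b = v a := by
    intro a b hab
    have h1 := (Finset.sum_eq_zero_iff_of_nonneg (fun g' _ => hnn a g')).1
      (hE a (Finset.mem_univ _)) b (Finset.mem_univ _)
    have h2 := hSpos a b hab
    have h3 : (v b - v a) ^ 2 = 0 := by
      rcases mul_eq_zero.1 h1 with h | h
      · rcases mul_eq_zero.1 h with h | h
        · exact h
        · exact absurd h h2.ne'
      · exact absurd h hab.ne'
    exact sub_eq_zero.1 (pow_eq_zero_iff two_ne_zero |>.1 h3)
  have hconst : ∀ a b, v b = v a := by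
    intro a b
    induction hconn a b with
    | refl => rfl
    | tail _ h ih => exact (hedge _ _ h).trans ih
  funext g
  have h1 : ∑ g', v g' = Fintype.card G * v g := by
    rw [Finset.sum_congr rfl fun g' _ => hconst g g']
    simp
  rw [h1] at hsum
  have : (Fintype.card G : ℝ) ≠ 0 := by
    have : Nonempty G := ⟨g⟩
    exact_mod_cast Fintype.card_ne_zero
  exact (mul_eq_zero.1 hsum).resolve_left this

/-- Spectral estimate: if every eigenvalue `μ` of the symmetric matrix `A` satisfies `l μ ≤ μ²`,
then `l ⟨v, A v⟩ ≤ ‖A v‖²`. -/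
lemma isHermitian_mul_form_le {G : Type*} [Fintype G] [DecidableEq G]
    (A : Matrix G G ℝ) (hA : A.IsHermitian) (l : ℝ)
    (h : ∀ (t : ℝ) (v : G → ℝ), v ≠ 0 → A.mulVec v = t • v → l * t ≤ t ^ 2) (v : G → ℝ) :
    l * ∑ g, v g * A.mulVec v g ≤ ∑ g, (A.mulVec v g) ^ 2 := by
  let e := hA.eigenvectorBasis
  let x : EuclideanSpace ℝ G := WithLp.toLp 2 v
  let y : EuclideanSpace ℝ G := WithLp.toLp 2 (A.mulVec v)
  have hm : ∀ i, l * hA.eigenvalues i ≤ hA.eigenvalues i ^ 2 := by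
    intro i
    refine h _ (e i).ofLp ?_ (hA.mulVec_eigenvectorBasis i)
    intro h0
    apply e.orthonormal.ne_zero i
    ext g
    exact congrFun h0 g
  have hy : ∀ i, inner ℝ y (e i) = hA.eigenvalues i * inner ℝ x (e i) := by
    intro i
    have h1 : (e i).ofLp ⬝ᵥ A.mulVec v = hA.eigenvalues i * ((e i).ofLp ⬝ᵥ v) := by
      rw [Matrix.dotProduct_mulVec, ← Matrix.mulVec_transpose,
        (Matrix.conjTranspose_eq_transpose_of_trivial A).symm.trans hA, hA.mulVec_eigenvectorBasis i, smul_dotProduct,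
        smul_eq_mul]
    simpa [EuclideanSpace.inner_eq_star_dotProduct, x, y] using h1
  have hxy : ∑ g, v g * A.mulVec v g = inner ℝ x y := by
    simp [PiLp.inner_apply, x, y, mul_comm]
  have hyy : ∑ g, (A.mulVec v g) ^ 2 = inner ℝ y y := by
    rw [PiLp.inner_apply]
    simp [y, sq]
  rw [hxy, hyy, ← e.sum_inner_mul_inner x y, ← e.sum_inner_mul_inner y y, Finset.mul_sum]
  refine Finset.sum_le_sum fun i _ => ?_
  rw [real_inner_comm y (e i), hy i]
  nlinarith [mul_le_mul_of_nonneg_right (hm i) (sq_nonneg (inner ℝ x (e i)))]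

lemma graphLaplacian_eigenvalue_nonneg {G : Type*} [Fintype G] [DecidableEq G]
    (K S : G → G → ℝ)
    (hK0 : ∀ g g', 0 ≤ K g g') (hKsym : ∀ g g', K g g' = K g' g)
    (hS0 : ∀ g g', 0 ≤ S g g') (hSsym : ∀ g g', S g g' = S g' g)
    (t : ℝ) (v : G → ℝ) (hv : v ≠ 0) (h : (graphLaplacian K S).mulVec v = t • v) : 0 ≤ t := by
  have hE := graphLaplacian_energy K S hKsym hSsym v
  have hnn : 0 ≤ ∑ g, ∑ g', (v g' - v g) ^ 2 * S g g' * K g g' :=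
    Finset.sum_nonneg fun g _ => Finset.sum_nonneg fun g' _ =>
      mul_nonneg (mul_nonneg (sq_nonneg _) (hS0 _ _)) (hK0 _ _)
  have h1 : ∑ g, v g * (graphLaplacian K S).mulVec v g = t * ∑ g, v g ^ 2 := by
    rw [h, Finset.mul_sum]
    refine Finset.sum_congr rfl fun g _ => ?_
    simp only [Pi.smul_apply, smul_eq_mul]
    ring
  have hpos : 0 < ∑ g, v g ^ 2 := by
    obtain ⟨g, hg⟩ := Function.ne_iff.1 hv
    have hg' : v g ≠ 0 := hg
    exact Finset.sum_pos' (fun g _ => sq_nonneg _) ⟨g, Finset.mem_univ _, by positivity⟩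
  rw [hE, h1] at hnn
  exact nonneg_of_mul_nonneg_left hnn hpos

/-- When `L_S` has no nonzero eigenvalue, `λ_S` is the junk value `sInf ∅ = 0`; the bound persists
because then `L_S = 0` and the energy vanishes. -/
lemma graphLaplacian_energy_le {G : Type*} [Fintype G] [DecidableEq G]
    (K S : G → G → ℝ)
    (hK0 : ∀ g g', 0 ≤ K g g') (hKsym : ∀ g g', K g g' = K g' g)
    (hS0 : ∀ g g', 0 ≤ S g g') (hSsym : ∀ g g', S g g' = S g' g) (v : G → ℝ) :
    ∑ g, v g * (graphLaplacian K S).mulVec v g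
      ≤ (1 / firstNonzeroEigenvalue K S) * ∑ g, ((graphLaplacian K S).mulVec v g) ^ 2 := by
  have hA := graphLaplacian_isHermitian K S hKsym hSsym
  have hnonneg := graphLaplacian_eigenvalue_nonneg K S hK0 hKsym hS0 hSsym
  set A := graphLaplacian K S with hAdef
  set T : Set ℝ := {t : ℝ | t ≠ 0 ∧ ∃ v : G → ℝ, v ≠ 0 ∧ A.mulVec v = t • v} with hT
  have hl : firstNonzeroEigenvalue K S = sInf T := rfl
  have hbdd : BddBelow T := ⟨0, fun t ⟨_, w, hw, hw'⟩ => hnonneg t w hw hw'⟩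
  have hfin : T.Finite := by
    refine (Module.End.finite_hasEigenvalue (Matrix.toLin' A)).subset ?_
    rintro t ⟨_, w, hw, hw'⟩
    exact Module.End.hasEigenvalue_of_hasEigenvector
      ⟨Module.End.mem_eigenspace_iff.2 (by simpa using hw'), hw⟩
  rw [hl]
  rcases T.eq_empty_or_nonempty with hemp | hne
  -- every eigenvalue is zero, so the spectral estimate holds with any constant
  · have hz : ∀ l : ℝ, l * ∑ g, v g * A.mulVec v g ≤ ∑ g, (A.mulVec v g) ^ 2 := by
      intro l
      refine isHermitian_mul_form_le A hA l (fun t w hw hw' => ?_) v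
      have ht : t = 0 := by
        by_contra h0
        have hmem : t ∈ T := ⟨h0, w, hw, hw'⟩
        simp [hemp] at hmem
      simp [ht]
    rw [hemp, Real.sInf_empty, div_zero, zero_mul]
    by_contra! hcon
    have h1 := hz ((∑ g, (A.mulVec v g) ^ 2 + 1) / ∑ g, v g * A.mulVec v g)
    rw [div_mul_cancel₀ _ hcon.ne'] at h1
    linarith
  · have hmem : sInf T ∈ T := hne.csInf_mem hfin
    have hpos : 0 < sInf T := by
      obtain ⟨h0, w, hw, hw'⟩ := hmem
      exact lt_of_le_of_ne (hnonneg _ w hw hw') h0.symm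
    have h1 := isHermitian_mul_form_le A hA (sInf T) (fun t w hw hw' => by
      by_cases h0 : t = 0
      · simp [h0]
      · have h2 : sInf T ≤ t := csInf_le hbdd ⟨h0, w, hw, hw'⟩
        nlinarith) v
    rw [one_div, inv_mul_eq_div, le_div_iff₀ hpos]
    linarith

/-- **Existence, uniqueness and energy bound for the elliptic graph PDE.**
Let `(G,K)` be a connected finite weighted graph, let `φ : G → ℝ` satisfy `Σ_g φ(g) = 0`,
and let `S : G × G → [0,∞)` be symmetric and strictly positive whenever `K(g,g') > 0`.
Then there exists a unique `η : G → ℝ` with `Σ_g η(g) = 0` solving the graph PDE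
`div_g(∇_g η · S) = φ`, where `div_g h(g) = Σ_{g'} (h(g,g') − h(g',g)) K(g,g')` and
`(∇_g η · S)(g,g') = (η(g') − η(g)) S(g,g')`.  Moreover
`Σ_{g,g'} |η(g') − η(g)|² S(g,g') K(g,g') ≤ (1/λ_S) Σ_g |φ(g)|²`, where `λ_S` is the
first nonzero eigenvalue of the graph Laplacian matrix `L_S`. -/
theorem graph_pde_existence_uniqueness {G : Type*} [Fintype G] [DecidableEq G]
    (K S : G → G → ℝ) (φ : G → ℝ)
    (hK0 : ∀ g g', 0 ≤ K g g') (hKsym : ∀ g g', K g g' = K g' g)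
    (hconn : ∀ g g' : G, Relation.ReflTransGen (fun a b => 0 < K a b) g g')
    (hφ : ∑ g, φ g = 0)
    (hS0 : ∀ g g', 0 ≤ S g g') (hSsym : ∀ g g', S g g' = S g' g)
    (hSpos : ∀ g g', 0 < K g g' → 0 < S g g') :
    ∃ η : G → ℝ,
      ((∑ g, η g = 0) ∧
        (∀ g : G, ∑ g', ((η g' - η g) * S g g' - (η g - η g') * S g' g) * K g g' = φ g)) ∧
      (∀ η' : G → ℝ,
        ((∑ g, η' g = 0) ∧
          (∀ g : G, ∑ g', ((η' g' - η' g) * S g g' - (η' g - η' g') * S g' g) * K g g' = φ g))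
          → η' = η) ∧
      (∑ g, ∑ g', (η g' - η g) ^ 2 * S g g' * K g g'
        ≤ (1 / firstNonzeroEigenvalue K S) * ∑ g, (φ g) ^ 2) := by
  have hker := graphLaplacian_ker K S hK0 hKsym hconn hS0 hSsym hSpos
  have hsum := graphLaplacian_sum_mulVec K S hKsym hSsym
  simp only [graph_div_grad_eq K S hSsym]
  -- the rank-one correction `v ↦ L_S v + (Σ v) 1` makes the Laplacian invertible
  let f : (G → ℝ) →ₗ[ℝ] (G → ℝ) :=
    { toFun := fun v g => (graphLaplacian K S).mulVec v g + ∑ g', v g'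
      map_add' := fun v w => by
        funext g
        simp only [Matrix.mulVec_add, Pi.add_apply, Finset.sum_add_distrib]
        ring
      map_smul' := fun c v => by
        funext g
        simp only [Matrix.mulVec_smul, Pi.smul_apply, smul_eq_mul, RingHom.id_apply,
          ← Finset.mul_sum]
        ring }
  have hf : ∀ v g, f v g = (graphLaplacian K S).mulVec v g + ∑ g', v g' := fun _ _ => rfl
  have hfsum : ∀ v, ∑ g, f v g = 0 → ∑ g, v g = 0 := by
    intro v hv
    simp only [hf, Finset.sum_add_distrib, hsum, zero_add, Finset.sum_const, nsmul_eq_mul,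
      Finset.card_univ] at hv
    rcases mul_eq_zero.1 hv with h | h
    · have : IsEmpty G := Fintype.card_eq_zero_iff.1 (by exact_mod_cast h)
      simp
    · exact h
  have hinj : Function.Injective f := by
    rw [injective_iff_map_eq_zero]
    intro v hv
    have h0 : ∑ g, v g = 0 := hfsum v (by simp [hv])
    refine hker v h0 ?_
    funext g
    have := congrFun hv g
    rw [hf, h0, add_zero] at this
    exact this
  obtain ⟨η, hη⟩ := LinearMap.injective_iff_surjective.1 hinj (fun g => -φ g)
  have hη0 : ∑ g, η g = 0 := hfsum η (by simp [hη, hφ])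
  have hLη : ∀ g, (graphLaplacian K S).mulVec η g = -φ g := by
    intro g
    have := congrFun hη g
    rwa [hf, hη0, add_zero] at this
  refine ⟨η, ⟨hη0, fun g => by rw [hLη, neg_neg]⟩, ?_, ?_⟩
  · rintro η' ⟨h0, h1⟩
    apply hinj
    funext g
    rw [hf, hf, h0, hη0, hLη, ← h1 g, neg_neg]
  · rw [graphLaplacian_energy K S hKsym hSsym]
    have h := graphLaplacian_energy_le K S hK0 hKsym hS0 hSsym η
    simpa only [hLη, neg_sq] using h
end

section
/- Let μ, σ ∈ P_2(ℝ^d × G) and suppose A^{G,W,τ}(μ,σ) < ∞. Then the set Opt(μ,σ) of minimizers of the static semi-discrete transportation cost is non-empty, i.e., the infimum defining A^{G,W,τ}(μ,σ) is attained by some admissible pair (γ,h) ∈ ADM(μ,σ). -/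
/-!
The proof is the direct method, with the Hilbert structure of the exchange term replacing weak
compactness in `L²`.

The cost splits (`cost_eq`) into a part linear in the plans and `τ/4` times the squared `L²` norm of
the weighted exchange field `vec W K h`. Midpoints of admissible pairs are admissible
(`InADM.midpoint`), so along a minimizing sequence the parallelogram law forces the weighted fields
to be Cauchy in `L²` (`cauchySeq_of_midpoint`). Their limit is attained almost everywhere along a
subsequence.

Summing the balance condition over the graph cancels the antisymmetric exchange, so the second
marginals of the plans of any admissible pair lie below `Σ_g σ_g` (`InADM.snd_le_totalMass`). This
has two consequences. The plans are tight and have a weak limit along an ultrafilter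
(`exists_tendsto_of_marginals`). And the exchange flux is bounded almost everywhere by `τ⁻¹` times
the Lebesgue density of `Σ_g σ_g` (`InADM.abs_flux_le`), so that it converges in `L¹` by dominated
convergence even though nothing is known about the integrability of `e^{-W}`. Hence the balance
condition passes to the limit (`InADM.of_tendsto`).

The transport part of the cost is lower semicontinuous (`transport_le_of_tendsto`) and the exchange
part converges, so the limit pair attains the infimum.
-/

open MeasureTheory ENNReal Filter
open scoped RealInnerProductSpace Classical

noncomputable section

/-- `ℝ^d` as a Euclidean space. -/
abbrev Ed (d : ℕ) : Type := EuclideanSpace ℝ (Fin d)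

/-- The reference measure `dx ⊗ dg` on `ℝ^d × G` (Lebesgue times counting measure). -/
def refM (d : ℕ) (G : Type*) [MeasurableSpace G] : Measure (Ed d × G) :=
  (volume : Measure (Ed d)).prod Measure.count

/-- The fiber measure `μ_g` on `ℝ^d` of a measure `μ` on `ℝ^d × G`, so that
`μ = Σ_g μ_g ⊗ δ_g`, i.e. `μ_g(A) = μ(A × {g})`. -/
def fiber {d : ℕ} {G : Type*} [MeasurableSpace G] (μ : Measure (Ed d × G)) (g : G) :
    Measure (Ed d) :=
  (μ.restrict {p | p.2 = g}).map Prod.fst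

/-- `P_2(ℝ^d × G)`: Borel probability measures on `ℝ^d × G` with finite second moment. -/
def P2 (d : ℕ) (G : Type*) [MeasurableSpace G] : Set (Measure (Ed d × G)) :=
  {μ | IsProbabilityMeasure μ ∧ ∫⁻ p, ENNReal.ofReal (‖p.1‖ ^ 2) ∂μ < ⊤}

/-- The admissible pairs `(γ, h)` for the static semi-discrete transport problem between
`μ` and `σ`:  each `γ_g` has first marginal `μ_g`; `h` is antisymmetric in the two graph
variables and square integrable against `e^{-W} K`; and the balance condition
`σ_g = π_{2#}γ_g − τ Σ_{g'} h_{gg'} K(g,g') e^{-W} dx` holds. -/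
def InADM {d : ℕ} {G : Type*} [Fintype G] [MeasurableSpace G]
    (τ : ℝ) (W : Ed d → ℝ) (K : G → G → ℝ) (μ σ : Measure (Ed d × G))
    (γ : G → Measure (Ed d × Ed d)) (h : Ed d → G → G → ℝ) : Prop :=
  (∀ g, (γ g).map Prod.fst = fiber μ g) ∧
  (∀ g g', Measurable (fun x => h x g g')) ∧
  (∀ x g g', h x g g' = - h x g' g) ∧
  (∑ g, ∑ g', ∫⁻ x, ENNReal.ofReal ((h x g g') ^ 2 * Real.exp (-W x) * K g g') < ⊤) ∧
  (∀ g, ∀ A : Set (Ed d), MeasurableSet A →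
    ((fiber σ g) A).toReal
      = (((γ g).map Prod.snd) A).toReal
        - τ * ∫ x in A, (∑ g', h x g g' * K g g') * Real.exp (-W x))

/-- The static transport cost
`C_τ(γ,h) = Σ_{g,g'} [ (1/2τ) ∫ |x−x'|² dγ_g + (τ/4) ∫ h_{gg'}² K(g,g') e^{−W} dx ]`. -/
def Cost {d : ℕ} {G : Type*} [Fintype G] [MeasurableSpace G]
    (τ : ℝ) (W : Ed d → ℝ) (K : G → G → ℝ)
    (γ : G → Measure (Ed d × Ed d)) (h : Ed d → G → G → ℝ) : ℝ≥0∞ :=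
  ∑ g, ∑ g' : G,
    (ENNReal.ofReal (1 / (2 * τ)) * (∫⁻ p, ENNReal.ofReal (‖p.1 - p.2‖ ^ 2) ∂(γ g))
      + ENNReal.ofReal (τ / 4) * ∫⁻ x, ENNReal.ofReal ((h x g g') ^ 2 * K g g' * Real.exp (-W x)))

/-- The static semi-discrete transportation cost
`A^{G,W,τ}(μ,σ) = inf_{(γ,h) ∈ ADM(μ,σ)} C_τ(γ,h)` (with value `∞` if `ADM(μ,σ) = ∅`). -/
def ACost {d : ℕ} {G : Type*} [Fintype G] [MeasurableSpace G]
    (τ : ℝ) (W : Ed d → ℝ) (K : G → G → ℝ) (μ σ : Measure (Ed d × G)) : ℝ≥0∞ :=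
  ⨅ (γ : G → Measure (Ed d × Ed d)) (h : Ed d → G → G → ℝ)
    (_ : InADM τ W K μ σ γ h), Cost τ W K γ h

/-- `(γ,h)` is an optimal pair: admissible and achieving the infimal cost. -/
def InOpt {d : ℕ} {G : Type*} [Fintype G] [MeasurableSpace G]
    (τ : ℝ) (W : Ed d → ℝ) (K : G → G → ℝ) (μ σ : Measure (Ed d × G))
    (γ : G → Measure (Ed d × Ed d)) (h : Ed d → G → G → ℝ) : Prop :=
  InADM τ W K μ σ γ h ∧ Cost τ W K γ h = ACost τ W K μ σ

/-- The relative entropy `E(μ) = Σ_g ∫ [f log f + V f] dx` if `μ = f dx⊗dg`,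
and `E(μ) = +∞` otherwise. -/
def Ent {d : ℕ} {G : Type*} [Fintype G] [MeasurableSpace G]
    (V : Ed d → G → ℝ) (μ : Measure (Ed d × G)) : EReal :=
  if (μ ≪ refM d G) ∧
      Integrable (fun p : Ed d × G =>
        (μ.rnDeriv (refM d G) p).toReal * Real.log ((μ.rnDeriv (refM d G) p).toReal)
          + V p.1 p.2 * (μ.rnDeriv (refM d G) p).toReal) (refM d G)
  then ((∫ p, ((μ.rnDeriv (refM d G) p).toReal * Real.log ((μ.rnDeriv (refM d G) p).toReal)
          + V p.1 p.2 * (μ.rnDeriv (refM d G) p).toReal) ∂(refM d G) : ℝ) : EReal)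
  else ⊤

/-- `μ_τ` is a minimizer over `P_2(ℝ^d × G)` of `σ ↦ E(σ) + A^{G,W,τ}(μ,σ)`. -/
def IsJKOMin {d : ℕ} {G : Type*} [Fintype G] [MeasurableSpace G]
    (τ : ℝ) (W : Ed d → ℝ) (K : G → G → ℝ) (V : Ed d → G → ℝ)
    (μ μτ : Measure (Ed d × G)) : Prop :=
  μτ ∈ P2 d G ∧
    ∀ σ ∈ P2 d G,
      Ent V μτ + (ACost τ W K μ μτ : EReal) ≤ Ent V σ + (ACost τ W K μ σ : EReal)

/-- `μ` has density `f` with respect to `dx ⊗ dg`. -/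
def HasDens {d : ℕ} {G : Type*} [Fintype G] [MeasurableSpace G]
    (μ : Measure (Ed d × G)) (f : Ed d → G → ℝ) : Prop :=
  (∀ x g, 0 ≤ f x g) ∧ Measurable (fun p : Ed d × G => f p.1 p.2) ∧
    μ = (refM d G).withDensity (fun p => ENNReal.ofReal (f p.1 p.2))

/-- The (topological) support of a measure. -/
def msupport {α : Type*} [TopologicalSpace α] [MeasurableSpace α] (ν : Measure α) : Set α :=
  {x | ∀ U ∈ nhds x, 0 < ν U}

/-- `y` is a Lebesgue point of `u`: averages of `u` over balls `B_r(y)` converge to `u(y)`. -/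
def LebesguePoint {d : ℕ} {F : Type*} [NormedAddCommGroup F] [NormedSpace ℝ F]
    (u : Ed d → F) (y : Ed d) : Prop :=
  Filter.Tendsto (fun r : ℝ => ⨍ x in Metric.ball y r, u x ∂volume)
    (nhdsWithin 0 (Set.Ioi 0)) (nhds (u y))

end


open MeasureTheory ENNReal Topology

noncomputable section

/-! ### Integrability and domination from bounds on set integrals -/

/-- A measurable function whose set integrals are uniformly bounded is integrable. The bound is used
only on sets where `F` is integrable (bounded, of finite volume), so the value `0` that the Bochner
integral takes on non-integrable functions does no harm. This is what makes the exchange flux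
integrable although `e^{-W}` need not be locally integrable. -/
lemma integrable_of_setIntegral_bounded {d : ℕ} {F : Ed d → ℝ} (hF : Measurable F) (C : ℝ)
    (hC : ∀ A, MeasurableSet A → |∫ x in A, F x| ≤ C) : Integrable F := by
  let φ : ℕ → Set (Ed d) := fun k => {x | |F x| ≤ k} ∩ Metric.closedBall 0 k
  have hφm : ∀ k, MeasurableSet (φ k) := fun k =>
    (measurableSet_le hF.abs measurable_const).inter measurableSet_closedBall
  have hcov : AECover volume atTop φ := by
    refine ⟨?_, hφm⟩
    refine ae_of_all _ fun x => ?_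
    have h1 := tendsto_natCast_atTop_atTop (R := ℝ) |>.eventually_ge_atTop |F x|
    have h2 := tendsto_natCast_atTop_atTop (R := ℝ) |>.eventually_ge_atTop ‖x‖
    filter_upwards [h1, h2] with k hk1 hk2
    exact ⟨hk1, by simpa using hk2⟩
  have hint : ∀ k, IntegrableOn F (φ k) := by
    intro k
    refine Measure.integrableOn_of_bounded (M := (k : ℝ)) ?_ hF.aestronglyMeasurable ?_
    · exact ((measure_mono Set.inter_subset_right).trans_lt
        (isCompact_closedBall (0 : Ed d) (k : ℝ)).measure_lt_top).ne
    · filter_upwards [ae_restrict_mem (hφm k)] with x hx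
      exact hx.1
  refine hcov.integrable_of_integral_norm_bounded (2 * C) hint (Eventually.of_forall fun k => ?_)
  have hpos : MeasurableSet {x | 0 ≤ F x} := measurableSet_le measurable_const hF
  rw [← integral_inter_add_sdiff hpos (hint k).norm]
  have e1 : ∫ x in φ k ∩ {x | 0 ≤ F x}, ‖F x‖ = ∫ x in φ k ∩ {x | 0 ≤ F x}, F x :=
    setIntegral_congr_fun ((hφm k).inter hpos) fun x hx => by
      simp [abs_of_nonneg hx.2.out]
  have e2 : ∫ x in φ k \ {x | 0 ≤ F x}, ‖F x‖ = - ∫ x in φ k \ {x | 0 ≤ F x}, F x := by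
    rw [← integral_neg]
    refine setIntegral_congr_fun ((hφm k).diff hpos) fun x hx => ?_
    have : F x < 0 := not_le.1 hx.2
    simp [abs_of_neg this]
  rw [e1, e2]
  have b1 := hC _ ((hφm k).inter hpos)
  have b2 := hC _ ((hφm k).diff hpos)
  linarith [le_abs_self (∫ x in φ k ∩ {x | 0 ≤ F x}, F x),
    neg_abs_le (∫ x in φ k \ {x | 0 ≤ F x}, F x)]

/-- If a finite measure `S` dominates all set integrals of `F`, then its Lebesgue density dominates
`|F|` almost everywhere: the singular part of `S` sits on a null set, which may be removed from any
set of integration. -/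
lemma abs_le_rnDeriv_of_setIntegral_le {d : ℕ} {S : Measure (Ed d)} [IsFiniteMeasure S]
    {F : Ed d → ℝ} (hF : Integrable F)
    (hb : ∀ A, MeasurableSet A → |∫ x in A, F x| ≤ (S A).toReal) :
    ∀ᵐ x, |F x| ≤ (S.rnDeriv volume x).toReal := by
  have hs : Integrable (fun x => (S.rnDeriv volume x).toReal) (volume : Measure (Ed d)) :=
    Measure.integrable_toReal_rnDeriv
  obtain ⟨N, hN, hN1, hN2⟩ := S.mutuallySingular_singularPart (volume : Measure (Ed d))
  have hvol : ∀ A, MeasurableSet A →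
      |∫ x in A, F x| ≤ ∫ x in A, (S.rnDeriv volume x).toReal := by
    intro A hA
    have h0 : (volume : Measure (Ed d)) (Nᶜ) = 0 := hN2
    have hae : (A ∩ N : Set (Ed d)) =ᵐ[volume] A := by
      refine inter_ae_eq_left_of_ae_eq_univ ?_
      exact ae_eq_univ.2 h0
    rw [← setIntegral_congr_set hae, ← setIntegral_congr_set hae]
    refine (hb _ (hA.inter hN)).trans (le_of_eq ?_)
    have hAN : MeasurableSet (A ∩ N) := hA.inter hN
    rw [integral_toReal (by fun_prop) (ae_restrict_of_ae (S.rnDeriv_lt_top volume)),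
      ← withDensity_apply _ hAN]
    congr 1
    conv_lhs => rw [S.haveLebesgueDecomposition_add volume]
    rw [Measure.add_apply, measure_mono_null Set.inter_subset_right hN1, zero_add]
  have h1 : F ≤ᵐ[volume] fun x => (S.rnDeriv volume x).toReal :=
    ae_le_of_forall_setIntegral_le hF hs fun A hA _ => (le_abs_self _).trans (hvol A hA)
  have h2 : (fun x => -F x) ≤ᵐ[volume] fun x => (S.rnDeriv volume x).toReal :=
    ae_le_of_forall_setIntegral_le hF.neg hs fun A hA _ => by
      rw [integral_neg]; exact (neg_le_abs _).trans (hvol A hA)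
  filter_upwards [h1, h2] with x hx1 hx2
  exact abs_le.2 ⟨by linarith, hx1⟩

/-- Plans with a fixed first marginal and second marginals below a fixed finite measure form a tight
family, so by Prokhorov they converge weakly along every ultrafilter. -/
lemma exists_tendsto_of_marginals {d : ℕ} (α β : Measure (Ed d)) [IsFiniteMeasure α]
    [IsFiniteMeasure β] (γ : ℕ → FiniteMeasure (Ed d × Ed d))
    (h1 : ∀ n, (γ n : Measure (Ed d × Ed d)).map Prod.fst = α)
    (h2 : ∀ n, (γ n : Measure (Ed d × Ed d)).map Prod.snd ≤ β) (U : Ultrafilter ℕ) :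
    ∃ γ' : FiniteMeasure (Ed d × Ed d), Tendsto γ U (𝓝 γ') := by
  obtain ⟨u, -, u_pos, u_lim⟩ :
      ∃ u : ℕ → NNReal, StrictAnti u ∧ (∀ n, 0 < u n) ∧ Tendsto u atTop (𝓝 0) :=
    exists_seq_strictAnti_tendsto 0
  have ht : IsTightMeasureSet {α + β} := isTightMeasureSet_singleton
  rw [isTightMeasureSet_iff_exists_isCompact_measure_compl_le] at ht
  choose Q hQc hQ using fun n => ht (u n) (by exact_mod_cast u_pos n)
  have hcomp := isCompact_setOfPred_finiteMeasure_mass_le_compl_isCompact_le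
    (E := Ed d × Ed d) (u := u) (K := fun n => Q n ×ˢ Q n) (α Set.univ).toNNReal u_lim
    (fun n => (hQc n).prod (hQc n)) (Or.inl inferInstance)
  have hmem : ∀ n, γ n ∈ {μ : FiniteMeasure (Ed d × Ed d) | μ.mass ≤ (α Set.univ).toNNReal ∧
      ∀ k, μ (Q k ×ˢ Q k)ᶜ ≤ u k} := by
    intro n
    refine ⟨?_, fun k => ?_⟩
    · rw [← h1 n, Measure.map_apply measurable_fst MeasurableSet.univ]
      exact le_rfl
    · rw [← ENNReal.coe_le_coe, FiniteMeasure.ennreal_coeFn_eq_coeFn_toMeasure]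
      have hmQ : MeasurableSet (Q k)ᶜ := (hQc k).measurableSet.compl
      have hsub : (Q k ×ˢ Q k)ᶜ ⊆ Prod.fst ⁻¹' (Q k)ᶜ ∪ Prod.snd ⁻¹' (Q k)ᶜ := by
        intro p hp
        simp only [Set.mem_compl_iff, Set.mem_prod, not_and_or] at hp
        exact hp
      calc (γ n : Measure (Ed d × Ed d)) (Q k ×ˢ Q k)ᶜ
          ≤ (γ n : Measure (Ed d × Ed d)) (Prod.fst ⁻¹' (Q k)ᶜ)
            + (γ n : Measure (Ed d × Ed d)) (Prod.snd ⁻¹' (Q k)ᶜ) :=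
            (measure_mono hsub).trans (measure_union_le _ _)
        _ = (γ n : Measure (Ed d × Ed d)).map Prod.fst (Q k)ᶜ
            + (γ n : Measure (Ed d × Ed d)).map Prod.snd (Q k)ᶜ := by
            rw [Measure.map_apply measurable_fst hmQ, Measure.map_apply measurable_snd hmQ]
        _ ≤ α (Q k)ᶜ + β (Q k)ᶜ := add_le_add (by rw [h1 n]) (h2 n _)
        _ ≤ u k := by
            have := hQ k (α + β) rfl
            rwa [Measure.add_apply] at this
  obtain ⟨γ', -, hγ'⟩ := hcomp.ultrafilter_le_nhds (U.map γ)
    (le_principal_iff.2 (Ultrafilter.mem_map.2 (Filter.univ_mem' hmem)))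
  exact ⟨γ', hγ'⟩

lemma tendsto_lintegral_min {E : Type*} [MeasurableSpace E] (γ : Measure E)
    {f : E → NNReal} (hf : Measurable f) :
    Tendsto (fun k : ℕ => ∫⁻ p, (min (f p) k : NNReal) ∂γ) atTop (𝓝 (∫⁻ p, f p ∂γ)) := by
  refine lintegral_tendsto_of_tendsto_of_monotone ?_ ?_ ?_
  · intro k; fun_prop
  · refine ae_of_all _ fun p k l hkl => ?_
    exact ENNReal.coe_le_coe.2 (min_le_min_left _ (Nat.cast_le.2 hkl))
  · refine ae_of_all _ fun p => ?_
    refine tendsto_const_nhds.congr' ?_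
    filter_upwards [(tendsto_natCast_atTop_atTop (R := NNReal)).eventually_ge_atTop (f p)]
      with k hk
    rw [min_eq_left hk]

/-! ### Flux, weighted exchange field and the splitting of the cost -/

/-- The density `Σ_{g'} h_{gg'} K(g,g') e^{-W}` of the mass exchanged at `g`. -/
def flux {d : ℕ} {G : Type*} [Fintype G] (W : Ed d → ℝ) (K : G → G → ℝ)
    (h : Ed d → G → G → ℝ) (g : G) (x : Ed d) : ℝ :=
  (∑ g', h x g g' * K g g') * Real.exp (-W x)

/-- The weighted exchange field `x ↦ (√(K(g,g') e^{-W(x)}) h_{gg'}(x))_{(g,g')}`. Its squared `L²`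
norm with respect to Lebesgue measure is the exchange part of the cost up to the factor `τ/4`, so
the Hilbert space `L²(ℝ^d; ℝ^{G×G})` replaces a family of weighted `L²` spaces. -/
def vec {d : ℕ} {G : Type*} [Fintype G] (W : Ed d → ℝ) (K : G → G → ℝ)
    (h : Ed d → G → G → ℝ) (x : Ed d) : EuclideanSpace ℝ (G × G) :=
  WithLp.toLp 2 fun p => Real.sqrt (K p.1 p.2 * Real.exp (-W x)) * h x p.1 p.2

/-- The transport part of the cost. As in `Cost`, the summand does not depend on `g'`, so each plan
is counted once for every element of `G`. -/
def transport {d : ℕ} {G : Type*} [Fintype G] (τ : ℝ) (γ : G → Measure (Ed d × Ed d)) : ℝ≥0∞ :=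
  ∑ g, ∑ _g' : G, ENNReal.ofReal (1 / (2 * τ)) *
    ∫⁻ p, ENNReal.ofReal (‖p.1 - p.2‖ ^ 2) ∂(γ g)

/-- The projection `Σ_g σ_g` of `σ` to `ℝ^d`. -/
def totalMass {d : ℕ} {G : Type*} [Fintype G] [MeasurableSpace G] (σ : Measure (Ed d × G)) :
    Measure (Ed d) :=
  ∑ g, fiber σ g

section

set_option linter.unusedSectionVars false

variable {d : ℕ} {G : Type*} [Fintype G] [MeasurableSpace G]
  {τ : ℝ} {W : Ed d → ℝ} {K : G → G → ℝ} {μ σ : Measure (Ed d × G)}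
  {γ : G → Measure (Ed d × Ed d)} {h : Ed d → G → G → ℝ}

instance isFiniteMeasure_fiber [IsFiniteMeasure σ] (g : G) : IsFiniteMeasure (fiber σ g) := by
  unfold fiber; infer_instance

instance isFiniteMeasure_totalMass [IsFiniteMeasure σ] : IsFiniteMeasure (totalMass σ) := by
  unfold totalMass; infer_instance

lemma fiber_le_totalMass (g : G) : fiber σ g ≤ totalMass σ := by
  intro A
  unfold totalMass
  rw [Measure.finsetSum_apply]
  exact Finset.single_le_sum (f := fun g => fiber σ g A) (fun _ _ => bot_le)
    (Finset.mem_univ g)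

lemma measurable_flux (hW : Measurable W) (hh : ∀ g g', Measurable (fun x => h x g g')) (g : G) :
    Measurable (flux W K h g) := by
  unfold flux
  exact (Finset.measurable_sum _ fun g' _ => (hh g g').mul_const _).mul (by fun_prop)

/-- Antisymmetry of `h` and symmetry of `K`: the exchange creates no mass in total. -/
lemma sum_flux_eq_zero (hKsym : ∀ g g', K g g' = K g' g)
    (hanti : ∀ x g g', h x g g' = - h x g' g) (x : Ed d) : ∑ g, flux W K h g x = 0 := by
  unfold flux
  rw [← Finset.sum_mul]
  have : ∑ g, ∑ g', h x g g' * K g g' = - ∑ g, ∑ g', h x g g' * K g g' := by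
    conv_lhs => rw [Finset.sum_comm]
    rw [← Finset.sum_neg_distrib]
    refine Finset.sum_congr rfl fun g _ => ?_
    rw [← Finset.sum_neg_distrib]
    refine Finset.sum_congr rfl fun g' _ => ?_
    rw [hanti x g' g, hKsym g' g]; ring
  rw [show ∑ g, ∑ g', h x g g' * K g g' = 0 by linarith, zero_mul]

lemma InADM.isFiniteMeasure [IsFiniteMeasure μ] (H : InADM τ W K μ σ γ h) (g : G) :
    IsFiniteMeasure (γ g) := by
  refine ⟨?_⟩
  have := measure_lt_top (fiber μ g) Set.univ
  rwa [← H.1 g, Measure.map_apply measurable_fst MeasurableSet.univ] at this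

lemma InADM.integrable_flux [IsFiniteMeasure μ] [IsFiniteMeasure σ] (hτ : 0 < τ)
    (hW : Measurable W) (H : InADM τ W K μ σ γ h) (g : G) : Integrable (flux W K h g) := by
  have := H.isFiniteMeasure
  refine integrable_of_setIntegral_bounded (measurable_flux hW H.2.1 g)
    ((((γ g).map Prod.snd).real Set.univ + (fiber σ g).real Set.univ) / τ) fun A hA => ?_
  have e : τ * ∫ x in A, flux W K h g x
      = ((γ g).map Prod.snd).real A - (fiber σ g).real A := by
    have := H.2.2.2.2 g A hA
    simp only [Measure.real, flux]
    linarith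
  rw [le_div_iff₀ hτ, mul_comm,
    show τ * |∫ x in A, flux W K h g x| = |τ * ∫ x in A, flux W K h g x| by
      rw [abs_mul, abs_of_pos hτ], e, abs_le]
  have h1 : ((γ g).map Prod.snd).real A ≤ ((γ g).map Prod.snd).real Set.univ :=
    measureReal_mono (Set.subset_univ _)
  have h2 : (fiber σ g).real A ≤ (fiber σ g).real Set.univ :=
    measureReal_mono (Set.subset_univ _)
  have h3 : 0 ≤ ((γ g).map Prod.snd).real A := measureReal_nonneg
  have h4 : 0 ≤ (fiber σ g).real A := measureReal_nonneg
  constructor <;> linarith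

/-- Summing the balance condition over `g` cancels the fluxes, so the second marginals of the plans
add up to `Σ_g σ_g`; in particular each of them lies below it. -/
lemma InADM.snd_le_totalMass [IsFiniteMeasure μ] [IsFiniteMeasure σ] (hτ : 0 < τ)
    (hW : Measurable W) (hKsym : ∀ g g', K g g' = K g' g) (H : InADM τ W K μ σ γ h) (g : G) :
    (γ g).map Prod.snd ≤ totalMass σ := by
  have := H.isFiniteMeasure
  refine Measure.le_iff.2 fun A hA => ?_
  have hsum : ∑ g, ((γ g).map Prod.snd A) = totalMass σ A := by
    unfold totalMass
    rw [Measure.finsetSum_apply, ← ENNReal.toReal_eq_toReal_iff' (by simp) (by simp),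
      ENNReal.toReal_sum (by simp), ENNReal.toReal_sum (by simp)]
    have e : ∀ g, (fiber σ g A).toReal = ((γ g).map Prod.snd A).toReal
        - τ * ∫ x in A, flux W K h g x := fun g => H.2.2.2.2 g A hA
    simp_rw [e]
    rw [Finset.sum_sub_distrib, ← Finset.mul_sum, ← integral_finsetSum _
      (fun g _ => (H.integrable_flux hτ hW g).integrableOn)]
    simp [sum_flux_eq_zero hKsym H.2.2.1]
  rw [← hsum]
  exact Finset.single_le_sum (f := fun g => (γ g).map Prod.snd A) (fun _ _ => bot_le)
    (Finset.mem_univ g)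

/-- The flux is a difference of two measures below `Σ_g σ_g`, so it is dominated by a density that
is the same for all admissible pairs. -/
lemma InADM.abs_flux_le [IsFiniteMeasure μ] [IsFiniteMeasure σ] (hτ : 0 < τ)
    (hW : Measurable W) (hKsym : ∀ g g', K g g' = K g' g) (H : InADM τ W K μ σ γ h) (g : G) :
    ∀ᵐ x, |τ * flux W K h g x| ≤ ((totalMass σ).rnDeriv volume x).toReal := by
  have := H.isFiniteMeasure
  refine abs_le_rnDeriv_of_setIntegral_le ((H.integrable_flux hτ hW g).const_mul τ)
    fun A hA => ?_
  have e : ∫ x in A, τ * flux W K h g x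
      = ((γ g).map Prod.snd A).toReal - (fiber σ g A).toReal := by
    have := H.2.2.2.2 g A hA
    rw [integral_const_mul]
    simp only [flux]
    linarith
  have h1 : ((γ g).map Prod.snd A).toReal ≤ (totalMass σ A).toReal :=
    ENNReal.toReal_mono (by simp) (H.snd_le_totalMass hτ hW hKsym g A)
  have h2 : (fiber σ g A).toReal ≤ (totalMass σ A).toReal :=
    ENNReal.toReal_mono (by simp) (fiber_le_totalMass g A)
  have h3 : 0 ≤ ((γ g).map Prod.snd A).toReal := ENNReal.toReal_nonneg
  have h4 : 0 ≤ (fiber σ g A).toReal := ENNReal.toReal_nonneg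
  rw [e, abs_le]
  constructor <;> linarith

lemma measurable_vec (hW : Measurable W) (hh : ∀ g g', Measurable (fun x => h x g g')) :
    Measurable (vec W K h) := by
  unfold vec
  refine (WithLp.measurable_toLp 2 _).comp (measurable_pi_iff.2 fun p => ?_)
  exact (by fun_prop : Measurable fun x => Real.sqrt (K p.1 p.2 * Real.exp (-W x))).mul
    (hh p.1 p.2)

lemma enorm_vec_sq (hK0 : ∀ g g', 0 ≤ K g g') (x : Ed d) :
    ‖vec W K h x‖ₑ ^ 2
      = ∑ g, ∑ g', ENNReal.ofReal ((h x g g') ^ 2 * K g g' * Real.exp (-W x)) := by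
  rw [← ofReal_norm, ← ENNReal.ofReal_pow (norm_nonneg _),
    EuclideanSpace.real_norm_sq_eq, ENNReal.ofReal_sum_of_nonneg (fun _ _ => sq_nonneg _),
    Fintype.sum_prod_type]
  refine Finset.sum_congr rfl fun g _ => Finset.sum_congr rfl fun g' _ => ?_
  simp only [vec]
  rw [mul_pow, Real.sq_sqrt (mul_nonneg (hK0 g g') (Real.exp_pos _).le)]
  congr 1; ring

lemma lintegral_vec (hK0 : ∀ g g', 0 ≤ K g g') (hW : Measurable W)
    (hh : ∀ g g', Measurable (fun x => h x g g')) :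
    ∫⁻ x, ‖vec W K h x‖ₑ ^ 2
      = ∑ g, ∑ g', ∫⁻ x, ENNReal.ofReal ((h x g g') ^ 2 * K g g' * Real.exp (-W x)) := by
  have hm : ∀ g g', Measurable fun x =>
      ENNReal.ofReal ((h x g g') ^ 2 * K g g' * Real.exp (-W x)) := fun g g' =>
    ((((hh g g').pow_const 2).mul_const _).mul (by fun_prop)).ennreal_ofReal
  simp_rw [enorm_vec_sq hK0]
  rw [lintegral_finsetSum _ fun g _ => Finset.measurable_sum _ fun g' _ => hm g g']
  exact Finset.sum_congr rfl fun g _ => lintegral_finsetSum _ fun g' _ => hm g g'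

lemma cost_eq (hK0 : ∀ g g', 0 ≤ K g g') (hW : Measurable W)
    (hh : ∀ g g', Measurable (fun x => h x g g')) :
    Cost τ W K γ h
      = transport τ γ + ENNReal.ofReal (τ / 4) * ∫⁻ x, ‖vec W K h x‖ₑ ^ 2 := by
  rw [lintegral_vec hK0 hW hh]
  simp only [Cost, transport, Finset.sum_add_distrib, Finset.mul_sum]

/-- The square integrability clause of `InADM` says that the weighted field lies in `L²`. -/
lemma memLp_vec_iff (hK0 : ∀ g g', 0 ≤ K g g') (hW : Measurable W)
    (hh : ∀ g g', Measurable (fun x => h x g g')) :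
    MemLp (vec W K h) 2 ↔
      ∑ g, ∑ g', ∫⁻ x, ENNReal.ofReal ((h x g g') ^ 2 * Real.exp (-W x) * K g g') < ⊤ := by
  simp_rw [mul_right_comm _ (Real.exp _)]
  rw [← lintegral_vec hK0 hW hh]
  have e := eLpNorm_nnreal_pow_eq_lintegral (f := vec W K h) (μ := volume) (p := 2) two_ne_zero
  norm_num at e
  rw [← e]
  constructor
  · intro H
    exact ENNReal.pow_lt_top H.2
  · intro H
    exact ⟨(measurable_vec hW hh).aestronglyMeasurable,
      (ENNReal.pow_lt_top_iff.1 H).resolve_right two_ne_zero⟩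

lemma lintegral_enorm_sq_eq {E F : Type*} [MeasurableSpace E] [NormedAddCommGroup F]
    {ν : Measure E} {f : E → F} (hf : MemLp f 2 ν) :
    ∫⁻ x, ‖f x‖ₑ ^ 2 ∂ν = ENNReal.ofReal (‖hf.toLp f‖ ^ 2) := by
  have e := eLpNorm_nnreal_pow_eq_lintegral (f := f) (μ := ν) (p := 2) two_ne_zero
  norm_num at e
  rw [← e, Lp.norm_toLp, ENNReal.ofReal_pow ENNReal.toReal_nonneg, ENNReal.ofReal_toReal hf.2.ne]

lemma InADM.cost_eq (hK0 : ∀ g g', 0 ≤ K g g') (hW : Measurable W) (hτ : 0 < τ)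
    (H : InADM τ W K μ σ γ h) (hv : MemLp (vec W K h) 2) :
    Cost τ W K γ h = transport τ γ + ENNReal.ofReal (τ / 4 * ‖hv.toLp (vec W K h)‖ ^ 2) := by
  rw [_root_.cost_eq hK0 hW H.2.1, lintegral_enorm_sq_eq hv, ← ENNReal.ofReal_mul (by positivity)]

lemma vec_midpoint (h₁ h₂ : Ed d → G → G → ℝ) :
    vec W K (fun x g g' => (h₁ x g g' + h₂ x g g') / 2)
      = (2⁻¹ : ℝ) • (vec W K h₁ + vec W K h₂) := by
  funext x
  ext p
  simp [vec]
  ring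

/-- Admissible pairs are stable under midpoints. Integrability of the fluxes is needed to split the
integral in the balance condition. -/
lemma InADM.midpoint [IsFiniteMeasure μ] [IsFiniteMeasure σ] (hτ : 0 < τ)
    (hW : Measurable W) (hK0 : ∀ g g', 0 ≤ K g g') {γ₁ γ₂ : G → Measure (Ed d × Ed d)}
    {h₁ h₂ : Ed d → G → G → ℝ}
    (H₁ : InADM τ W K μ σ γ₁ h₁) (H₂ : InADM τ W K μ σ γ₂ h₂) :
    InADM τ W K μ σ (fun g => (2⁻¹ : ℝ≥0∞) • (γ₁ g + γ₂ g))
      (fun x g g' => (h₁ x g g' + h₂ x g g') / 2) := by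
  have := H₁.isFiniteMeasure
  have := H₂.isFiniteMeasure
  have hm : ∀ g g', Measurable fun x => (h₁ x g g' + h₂ x g g') / 2 := fun g g' =>
    ((H₁.2.1 g g').add (H₂.2.1 g g')).div_const 2
  refine ⟨fun g => ?_, hm, fun x g g' => ?_, ?_, fun g A hA => ?_⟩
  · rw [Measure.map_smul, Measure.map_add _ _ measurable_fst, H₁.1, H₂.1, ← two_smul ℝ≥0∞,
      smul_smul,
      ENNReal.inv_mul_cancel (by simp) (by simp), one_smul]
  · dsimp only
    rw [H₁.2.2.1 x g g', H₂.2.2.1 x g g']; ring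
  · rw [← memLp_vec_iff hK0 hW hm, vec_midpoint]
    exact (((memLp_vec_iff hK0 hW H₁.2.1).2 H₁.2.2.2.1).add
      ((memLp_vec_iff hK0 hW H₂.2.1).2 H₂.2.2.2.1)).const_smul _
  · have e : ∀ x, (∑ g', (h₁ x g g' + h₂ x g g') / 2 * K g g') * Real.exp (-W x)
        = 2⁻¹ * (flux W K h₁ g x + flux W K h₂ g x) := by
      intro x
      simp only [flux]
      rw [← add_mul, ← Finset.sum_add_distrib, ← mul_assoc, Finset.mul_sum]
      congr 1
      refine Finset.sum_congr rfl fun g' _ => by ring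
    simp_rw [e]
    rw [integral_const_mul, integral_add (H₁.integrable_flux hτ hW g).integrableOn
      (H₂.integrable_flux hτ hW g).integrableOn, Measure.map_smul,
      Measure.map_add _ _ measurable_snd, Measure.smul_apply, Measure.add_apply, smul_eq_mul,
      ENNReal.toReal_mul, ENNReal.toReal_add (by simp) (by simp)]
    have e1 := H₁.2.2.2.2 g A hA
    have e2 := H₂.2.2.2.2 g A hA
    simp only [flux]
    simp only [ENNReal.toReal_inv, ENNReal.toReal_ofNat]
    linarith

lemma transport_midpoint (γ₁ γ₂ : G → Measure (Ed d × Ed d)) :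
    transport τ (fun g => (2⁻¹ : ℝ≥0∞) • (γ₁ g + γ₂ g))
      = 2⁻¹ * (transport τ γ₁ + transport τ γ₂) := by
  simp only [transport, lintegral_smul_measure, lintegral_add_measure, smul_eq_mul]
  rw [← Finset.sum_add_distrib, Finset.mul_sum]
  refine Finset.sum_congr rfl fun g _ => ?_
  rw [← Finset.sum_add_distrib, Finset.mul_sum]
  refine Finset.sum_congr rfl fun g' _ => ?_
  ring

/-! ### Passage to the limit -/

open scoped BoundedContinuousFunction in
/-- The balance condition on measurable sets is equivalent to its weak form against bounded
continuous functions. Splitting `F` into positive and negative part turns either form into an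
identity between finite measures. -/
lemma balance_iff {ν ρ : Measure (Ed d)} [IsFiniteMeasure ν] [IsFiniteMeasure ρ] {F : Ed d → ℝ}
    (hFm : Measurable F) (hF : Integrable F) :
    (∀ A, MeasurableSet A → (ρ A).toReal = (ν A).toReal - ∫ x in A, F x) ↔
      ∀ f : Ed d →ᵇ ℝ, ∫ x, f x ∂ν = ∫ x, f x ∂ρ + ∫ x, f x * F x := by
  set P : Measure (Ed d) := volume.withDensity fun x => ENNReal.ofReal (F x) with hP
  set N : Measure (Ed d) := volume.withDensity fun x => ENNReal.ofReal (-F x) with hN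
  have : IsFiniteMeasure P := isFiniteMeasure_withDensity_ofReal hF.2
  have : IsFiniteMeasure N := isFiniteMeasure_withDensity_ofReal hF.neg.2
  have hset : ∀ A, MeasurableSet A → ∫ x in A, F x = (P A).toReal - (N A).toReal := by
    intro A hA
    rw [integral_eq_lintegral_pos_part_sub_lintegral_neg_part hF.integrableOn, hP, hN,
      withDensity_apply _ hA, withDensity_apply _ hA]
  have hfun : ∀ f : Ed d →ᵇ ℝ, ∫ x, f x * F x = ∫ x, f x ∂P - ∫ x, f x ∂N := by
    intro f
    have hi : ∀ {H : Ed d → ℝ}, Integrable H →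
        Integrable fun x => (ENNReal.ofReal (H x)).toReal * f x := by
      intro H hH
      simp_rw [ENNReal.toReal_ofReal']
      refine (hH.pos_part).mul_bdd (c := ‖f‖) f.continuous.aestronglyMeasurable
        (ae_of_all _ f.norm_coe_le_norm)
    rw [hP, hN, integral_withDensity_eq_integral_toReal_smul (by fun_prop) (by simp),
      integral_withDensity_eq_integral_toReal_smul (by fun_prop) (by simp)]
    simp only [smul_eq_mul]
    rw [← integral_sub (hi hF) (hi (H := fun x => -F x) hF.neg)]
    refine integral_congr_ae (ae_of_all _ fun x => ?_)
    simp only [ENNReal.toReal_ofReal']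
    rcases le_total 0 (F x) with hx | hx
    · rw [max_eq_left hx, max_eq_right (by linarith)]; ring
    · rw [max_eq_right hx, max_eq_left (by linarith)]; ring
  have hmid : ν + N = ρ + P ↔
      ∀ f : Ed d →ᵇ ℝ, ∫ x, f x ∂ν = ∫ x, f x ∂ρ + ∫ x, f x * F x := by
    have key : ∀ f : Ed d →ᵇ ℝ, (∫ x, f x ∂ν = ∫ x, f x ∂ρ + ∫ x, f x * F x) ↔
        ∫ x, f x ∂(ν + N) = ∫ x, f x ∂(ρ + P) := by
      intro f
      rw [integral_add_measure (f.integrable _) (f.integrable _),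
        integral_add_measure (f.integrable _) (f.integrable _), hfun f]
      constructor <;> intro H <;> linarith
    simp_rw [key]
    exact ⟨fun H f => by rw [H], ext_of_forall_integral_eq_of_IsFiniteMeasure⟩
  rw [← hmid]
  constructor
  · intro H
    refine Measure.ext fun A hA => ?_
    rw [← ENNReal.toReal_eq_toReal_iff' (by simp) (by simp), Measure.add_apply, Measure.add_apply,
      ENNReal.toReal_add (by simp) (by simp), ENNReal.toReal_add (by simp) (by simp)]
    have := H A hA
    rw [hset A hA] at this
    linarith
  · intro H A hA
    have := congrArg (fun m : Measure (Ed d) => (m A).toReal) H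
    simp only [Measure.add_apply] at this
    rw [ENNReal.toReal_add (by simp) (by simp), ENNReal.toReal_add (by simp) (by simp)] at this
    rw [hset A hA]
    linarith

/-- The transport cost is lower semicontinuous under weak convergence, being the supremum of the
transport costs for the bounded continuous integrands `min (|x - x'|²) k`. -/
lemma transport_le_of_tendsto {U : Ultrafilter ℕ} {γs : ℕ → G → FiniteMeasure (Ed d × Ed d)}
    {γ' : G → FiniteMeasure (Ed d × Ed d)} (hlim : ∀ g, Tendsto (fun n => γs n g) U (𝓝 (γ' g)))
    {t : ℝ≥0∞} (ht : Tendsto (fun n => transport τ fun g => (γs n g : Measure (Ed d × Ed d)))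
      U (𝓝 t)) :
    transport τ (fun g => (γ' g : Measure (Ed d × Ed d))) ≤ t := by
  let f : Ed d × Ed d → NNReal := fun p => ‖p.1 - p.2‖₊ ^ 2
  have hfc : Continuous f := by fun_prop
  have hf : ∀ p : Ed d × Ed d, ENNReal.ofReal (‖p.1 - p.2‖ ^ 2) = f p := by
    intro p
    rw [← coe_nnnorm, ← NNReal.coe_pow, ENNReal.ofReal_coe_nnreal]
  let Tk : ℕ → (G → FiniteMeasure (Ed d × Ed d)) → ℝ≥0∞ := fun k γ =>
    ∑ g, ∑ _g' : G, ENNReal.ofReal (1 / (2 * τ)) *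
      ∫⁻ p, (min (f p) k : NNReal) ∂(γ g : Measure (Ed d × Ed d))
  have hsup : Tendsto (fun k => Tk k γ') atTop
      (𝓝 (transport τ fun g => (γ' g : Measure (Ed d × Ed d)))) := by
    unfold transport
    simp_rw [hf]
    refine tendsto_finsetSum _ fun g _ => tendsto_finsetSum _ fun _ _ => ?_
    exact ENNReal.Tendsto.const_mul (tendsto_lintegral_min _ hfc.measurable) (Or.inr (by simp))
  refine le_of_tendsto' hsup fun k => ?_
  have hk : Tendsto (fun n => Tk k (γs n)) U (𝓝 (Tk k γ')) := by
    refine tendsto_finsetSum _ fun g _ => tendsto_finsetSum _ fun _ _ => ?_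
    refine ENNReal.Tendsto.const_mul ?_ (Or.inr (by simp))
    let b : BoundedContinuousFunction (Ed d × Ed d) NNReal :=
      BoundedContinuousFunction.mkOfBound ⟨fun p => min (f p) k, by fun_prop⟩ k fun p q => by
        have hb : ∀ p, ((min (f p) k : NNReal) : ℝ) ≤ k := fun p => by
          exact_mod_cast min_le_right (f p) (k : NNReal)
        rw [NNReal.dist_eq, abs_le]
        have h1 := hb p
        have h2 := hb q
        have h3 := (min (f p) (k : NNReal)).coe_nonneg
        have h4 := (min (f q) (k : NNReal)).coe_nonneg
        constructor
        · exact (by linarith : -(k : ℝ) ≤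
            ((min (f p) k : NNReal) : ℝ) - ((min (f q) k : NNReal) : ℝ))
        · exact (by linarith :
            ((min (f p) k : NNReal) : ℝ) - ((min (f q) k : NNReal) : ℝ) ≤ k)
    exact (FiniteMeasure.tendsto_iff_forall_lintegral_tendsto.1 (hlim g)) b
  refine le_of_tendsto_of_tendsto' hk ht fun n => ?_
  unfold transport
  simp_rw [hf]
  refine Finset.sum_le_sum fun g _ => Finset.sum_le_sum fun _ _ => ?_
  gcongr
  exact min_le_left _ _

/-- If `t n + a ‖v n‖²` tends to a lower bound `m` of the same functional at midpoints, with `t`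
averaged, then `v` is Cauchy, by the parallelogram law. -/
lemma cauchySeq_of_midpoint {E : Type*} [NormedAddCommGroup E] [InnerProductSpace ℝ E]
    {v : ℕ → E} {t : ℕ → ℝ} {a m : ℝ} (ha : 0 < a)
    (hlim : Tendsto (fun n => t n + a * ‖v n‖ ^ 2) atTop (𝓝 m))
    (hmid : ∀ n k, m ≤ (t n + t k) / 2 + a * ‖(2⁻¹ : ℝ) • (v n + v k)‖ ^ 2) : CauchySeq v := by
  have key : ∀ n k, a / 4 * ‖v n - v k‖ ^ 2 ≤
      ((t n + a * ‖v n‖ ^ 2) + (t k + a * ‖v k‖ ^ 2)) / 2 - m := by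
    intro n k
    have h1 := hmid n k
    have h2 := parallelogram_law_with_norm ℝ (v n) (v k)
    rw [norm_smul, mul_pow] at h1
    norm_num at h1
    nlinarith
  rw [Metric.cauchySeq_iff']
  intro ε hε
  have hpos : 0 < a / 4 * ε ^ 2 := by positivity
  obtain ⟨N, hN⟩ := (Metric.tendsto_atTop.1 hlim) (a / 4 * ε ^ 2) hpos
  refine ⟨N, fun n hn => ?_⟩
  have h1 := (abs_lt.1 (Real.dist_eq _ _ ▸ hN n hn)).2
  have h2 := (abs_lt.1 (Real.dist_eq _ _ ▸ hN N le_rfl)).2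
  have h3 := key n N
  have h4 : a / 4 * ‖v n - v N‖ ^ 2 < a / 4 * ε ^ 2 := by linarith
  have h5 := lt_of_mul_lt_mul_left h4 (by positivity)
  rw [dist_eq_norm]
  exact lt_of_pow_lt_pow_left₀ 2 hε.le h5

/-- An antisymmetric exchange function recovered from a weighted field. Antisymmetrizing makes
antisymmetry hold at every point, not only almost everywhere; where the weight vanishes, division
by zero gives the value `0`. -/
def unvec (W : Ed d → ℝ) (K : G → G → ℝ) (v : Ed d → EuclideanSpace ℝ (G × G))
    (x : Ed d) (g g' : G) : ℝ :=
  (v x (g, g') - v x (g', g)) / 2 / Real.sqrt (K g g' * Real.exp (-W x))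

lemma measurable_unvec (hW : Measurable W) {v : Ed d → EuclideanSpace ℝ (G × G)}
    (hv : Measurable v) (g g' : G) : Measurable fun x => unvec W K v x g g' := by
  unfold unvec
  have hc : ∀ p : G × G, Measurable fun x => v x p := fun p => by fun_prop
  have hsub : Measurable fun x => (v x (g, g') - v x (g', g) : ℝ) :=
    Measurable.sub (G := ℝ) (hc (g, g')) (hc (g', g))
  exact (hsub.div_const 2).div (by fun_prop)

lemma flux_eq_vec (hK0 : ∀ g g', 0 ≤ K g g') (g : G) (x : Ed d) :
    flux W K h g x = ∑ g', Real.sqrt (K g g' * Real.exp (-W x)) * vec W K h x (g, g') := by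
  unfold flux vec
  rw [Finset.sum_mul]
  refine Finset.sum_congr rfl fun g' _ => ?_
  simp only
  rw [← mul_assoc, Real.mul_self_sqrt (mul_nonneg (hK0 g g') (Real.exp_pos _).le)]
  ring

/-- `unvec` inverts `vec` at limits of weighted fields: such limits are antisymmetric and vanish
wherever the weight does. -/
lemma vec_unvec_of_tendsto (hKsym : ∀ g g', K g g' = K g' g)
    {hs : ℕ → Ed d → G → G → ℝ} (hanti : ∀ n x g g', hs n x g g' = - hs n x g' g)
    {v : Ed d → EuclideanSpace ℝ (G × G)} {x : Ed d}
    (hx : Tendsto (fun n => vec W K (hs n) x) atTop (𝓝 (v x))) :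
    vec W K (unvec W K v) x = v x := by
  have hc : ∀ p, Tendsto (fun n => vec W K (hs n) x p) atTop (𝓝 (v x p)) := fun p =>
    ((EuclideanSpace.proj (𝕜 := ℝ) p).continuous.tendsto (v x)).comp hx
  ext ⟨g, g'⟩
  have ha : v x (g', g) = - v x (g, g') := by
    refine tendsto_nhds_unique (hc (g', g)) ((hc (g, g')).neg.congr fun n => ?_)
    simp only [vec]
    rw [hanti n x g g', hKsym g g']; ring
  by_cases h0 : Real.sqrt (K g g' * Real.exp (-W x)) = 0
  · have : v x (g, g') = 0 := by
      refine tendsto_nhds_unique (hc (g, g')) (tendsto_const_nhds.congr fun n => ?_)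
      simp [vec, h0]
    rw [this]
    simp [vec, h0]
  · simp only [vec, unvec]
    rw [ha, mul_div_cancel₀ _ h0]; ring

/-- Admissibility is closed under weak convergence of the plans along an ultrafilter together with
almost everywhere convergence of the weighted fields. In the weak form of the balance condition the
fluxes converge by dominated convergence, the dominating function being the density of
`Σ_g σ_g`. -/
lemma InADM.of_tendsto [IsFiniteMeasure μ] [IsFiniteMeasure σ] (hτ : 0 < τ) (hW : Measurable W)
    (hK0 : ∀ g g', 0 ≤ K g g') (hKsym : ∀ g g', K g g' = K g' g)
    {γs : ℕ → G → FiniteMeasure (Ed d × Ed d)} {hs : ℕ → Ed d → G → G → ℝ}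
    (H : ∀ n, InADM τ W K μ σ (fun g => (γs n g : Measure (Ed d × Ed d))) (hs n))
    {U : Ultrafilter ℕ} (hU : (U : Filter ℕ) ≤ atTop) {γ' : G → FiniteMeasure (Ed d × Ed d)}
    (hγ : ∀ g, Tendsto (fun n => γs n g) U (𝓝 (γ' g)))
    {v : Ed d → EuclideanSpace ℝ (G × G)} (hvm : Measurable v) (hv2 : MemLp v 2)
    (hv : ∀ᵐ x, Tendsto (fun n => vec W K (hs n) x) atTop (𝓝 (v x))) :
    InADM τ W K μ σ (fun g => (γ' g : Measure (Ed d × Ed d))) (unvec W K v) := by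
  have hm : ∀ g g', Measurable fun x => unvec W K v x g g' := measurable_unvec hW hvm
  have hvec : ∀ᵐ x, vec W K (unvec W K v) x = v x := by
    filter_upwards [hv] with x hx
    exact vec_unvec_of_tendsto hKsym (fun n => (H n).2.2.1) hx
  have hflux : ∀ g, ∀ᵐ x, Tendsto (fun n => flux W K (hs n) g x) atTop
      (𝓝 (flux W K (unvec W K v) g x)) := by
    intro g
    filter_upwards [hv, hvec] with x hx hx'
    simp_rw [flux_eq_vec hK0, hx']
    refine tendsto_finsetSum _ fun g' _ => Tendsto.const_mul _ ?_
    exact ((EuclideanSpace.proj (𝕜 := ℝ) (g, g')).continuous.tendsto (v x)).comp hx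
  have hdom : ∀ g n, ∀ᵐ x, |τ * flux W K (hs n) g x|
      ≤ ((totalMass σ).rnDeriv volume x).toReal := fun g n =>
    (H n).abs_flux_le hτ hW hKsym g
  have hs_int : Integrable (fun x => ((totalMass σ).rnDeriv volume x).toReal)
      (volume : Measure (Ed d)) := Measure.integrable_toReal_rnDeriv
  have hlim_int : ∀ g, Integrable fun x => τ * flux W K (unvec W K v) g x := by
    intro g
    refine hs_int.mono' ((measurable_flux hW hm g).const_mul τ).aestronglyMeasurable ?_
    filter_upwards [hflux g, ae_all_iff.2 (hdom g)] with x hx hx'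
    exact le_of_tendsto' (hx.const_mul τ).abs hx'
  refine ⟨fun g => ?_, hm, fun x g g' => ?_, ?_, fun g A hA => ?_⟩
  · have h1 : Tendsto (fun n => (γs n g).map Prod.fst) U (𝓝 ((γ' g).map Prod.fst)) :=
      FiniteMeasure.tendsto_map_of_tendsto_of_continuous _ _ (hγ g) continuous_fst
    have h2 : ∀ n, (γs n g).map Prod.fst = (⟨fiber μ g, inferInstance⟩ : FiniteMeasure (Ed d)) :=
      fun n => Subtype.ext ((H n).1 g)
    simp_rw [h2] at h1
    have h5 : (γ' g).map Prod.fst = (⟨fiber μ g, inferInstance⟩ : FiniteMeasure (Ed d)) :=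
      tendsto_nhds_unique h1 tendsto_const_nhds
    exact congrArg (fun m : FiniteMeasure (Ed d) => (m : Measure (Ed d))) h5
  · unfold unvec
    rw [hKsym g g']; ring
  · rw [← memLp_vec_iff hK0 hW hm]
    exact hv2.ae_eq (hvec.mono fun x hx => hx.symm)
  · have key := (balance_iff (ν := (γ' g : Measure (Ed d × Ed d)).map Prod.snd)
      (ρ := fiber σ g) ((measurable_flux hW hm g).const_mul τ) (hlim_int g)).2 ?_ A hA
    · rw [key, integral_const_mul]
      rfl
    intro f
    have h1 : Tendsto (fun n => (γs n g).map Prod.snd) U (𝓝 ((γ' g).map Prod.snd)) :=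
      FiniteMeasure.tendsto_map_of_tendsto_of_continuous _ _ (hγ g) continuous_snd
    have h2 := FiniteMeasure.tendsto_iff_forall_integral_tendsto.1 h1 f
    have h3 : ∀ n, ∫ x, f x ∂((γs n g).map Prod.snd : Measure (Ed d))
        = ∫ x, f x ∂(fiber σ g) + ∫ x, f x * (τ * flux W K (hs n) g x) := by
      intro n
      refine (balance_iff (ν := (γs n g : Measure (Ed d × Ed d)).map Prod.snd)
        (ρ := fiber σ g) ((measurable_flux hW (H n).2.1 g).const_mul τ)
        (((H n).integrable_flux hτ hW g).const_mul τ)).1 (fun A hA => ?_) f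
      rw [integral_const_mul]
      exact (H n).2.2.2.2 g A hA
    have h4 : Tendsto (fun n => ∫ x, f x * (τ * flux W K (hs n) g x)) atTop
        (𝓝 (∫ x, f x * (τ * flux W K (unvec W K v) g x))) := by
      refine tendsto_integral_of_dominated_convergence
        (fun x => ‖f‖ * ((totalMass σ).rnDeriv volume x).toReal) (fun n => ?_)
        (hs_int.const_mul _) (fun n => ?_) ?_
      · exact f.continuous.aestronglyMeasurable.mul
          ((measurable_flux hW (H n).2.1 g).const_mul τ).aestronglyMeasurable
      · filter_upwards [hdom g n] with x hx
        rw [norm_mul]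
        exact mul_le_mul (f.norm_coe_le_norm x) hx (norm_nonneg _) (norm_nonneg _)
      · filter_upwards [hflux g] with x hx
        exact (hx.const_mul τ).const_mul _
    simp_rw [h3] at h2
    exact tendsto_nhds_unique h2 ((h4.mono_left hU).const_add _)

/-- A minimizing sequence of finite cost. -/
lemma exists_seq_cost_tendsto (hfin : ACost τ W K μ σ < ⊤) :
    ∃ (γs : ℕ → G → Measure (Ed d × Ed d)) (hs : ℕ → Ed d → G → G → ℝ),
      (∀ n, InADM τ W K μ σ (γs n) (hs n)) ∧ (∀ n, Cost τ W K (γs n) (hs n) < ⊤) ∧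
      Tendsto (fun n => Cost τ W K (γs n) (hs n)) atTop (𝓝 (ACost τ W K μ σ)) := by
  obtain ⟨u, -, hu, hlim⟩ := exists_seq_strictAnti_tendsto' hfin
  have hex : ∀ n, ∃ γ h, InADM τ W K μ σ γ h ∧ Cost τ W K γ h < u n := by
    intro n
    have := (hu n).1
    unfold ACost at this
    simp only [iInf_lt_iff] at this
    obtain ⟨γ, h, H, hc⟩ := this
    exact ⟨γ, h, H, hc⟩
  choose γs hs H hc using hex
  refine ⟨γs, hs, H, fun n => (hc n).trans (hu n).2,
    tendsto_of_tendsto_of_tendsto_of_le_of_le tendsto_const_nhds hlim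
    (fun n => ?_) (fun n => (hc n).le)⟩
  exact iInf_le_of_le (γs n) (iInf_le_of_le (hs n) (iInf_le _ (H n)))

end

end

open MeasureTheory ENNReal

/-- **Existence of optimal pairs** for the static semi-discrete transport problem:
if `A^{G,W,τ}(μ,σ) < ∞` then the infimum defining it is attained by some admissible pair. -/
theorem exists_optimal_pair {d : ℕ} {G : Type*} [Fintype G] [MeasurableSpace G]
    [MeasurableSingletonClass G]
    (τ : ℝ) (hτ : 0 < τ) (W : Ed d → ℝ) (hW : Measurable W) (K : G → G → ℝ)
    (hK0 : ∀ g g', 0 ≤ K g g') (hKsym : ∀ g g', K g g' = K g' g)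
    (hconn : ∀ g g' : G, Relation.ReflTransGen (fun a b => 0 < K a b) g g')
    (μ σ : Measure (Ed d × G)) (hμ : μ ∈ P2 d G) (hσ : σ ∈ P2 d G)
    (hfin : ACost τ W K μ σ < ⊤) :
    ∃ (γ : G → Measure (Ed d × Ed d)) (h : Ed d → G → G → ℝ),
      InOpt τ W K μ σ γ h := by
  obtain ⟨hμp, -⟩ := hμ
  obtain ⟨hσp, -⟩ := hσ
  have hle : ∀ γ h, InADM τ W K μ σ γ h → ACost τ W K μ σ ≤ Cost τ W K γ h := fun γ h H =>
    iInf_le_of_le γ (iInf_le_of_le h (iInf_le _ H))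
  obtain ⟨γs, hs, H, hCfin, hcost⟩ := exists_seq_cost_tendsto hfin
  have hv : ∀ n, MemLp (vec W K (hs n)) 2 := fun n =>
    (memLp_vec_iff hK0 hW (H n).2.1).2 (H n).2.2.2.1
  let v : ℕ → Lp (EuclideanSpace ℝ (G × G)) 2 (volume : Measure (Ed d)) := fun n =>
    (hv n).toLp (vec W K (hs n))
  let t : ℕ → ℝ := fun n => (transport τ (γs n)).toReal
  have hC : ∀ n, Cost τ W K (γs n) (hs n)
      = transport τ (γs n) + ENNReal.ofReal (τ / 4 * ‖v n‖ ^ 2) := fun n =>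
    (H n).cost_eq hK0 hW hτ (hv n)
  have htop : ∀ n, transport τ (γs n) ≠ ⊤ := fun n => by
    have := hCfin n
    rw [hC n] at this
    exact (ENNReal.add_lt_top.1 this).1.ne
  have ht : ∀ n, transport τ (γs n) = ENNReal.ofReal (t n) := fun n =>
    (ENNReal.ofReal_toReal (htop n)).symm
  have hsq : ∀ u : Lp (EuclideanSpace ℝ (G × G)) 2 (volume : Measure (Ed d)),
      0 ≤ τ / 4 * ‖u‖ ^ 2 := fun u => by positivity
  have hlim : Tendsto (fun n => t n + τ / 4 * ‖v n‖ ^ 2) atTop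
      (𝓝 (ACost τ W K μ σ).toReal) := by
    refine ((ENNReal.tendsto_toReal hfin.ne).comp hcost).congr fun n => ?_
    simp only [Function.comp_apply]
    rw [hC n, ENNReal.toReal_add (htop n) ENNReal.ofReal_ne_top, ENNReal.toReal_ofReal (hsq _)]
  have hmid : ∀ n k, (ACost τ W K μ σ).toReal
      ≤ (t n + t k) / 2 + τ / 4 * ‖(2⁻¹ : ℝ) • (v n + v k)‖ ^ 2 := by
    intro n k
    have HM := (H n).midpoint hτ hW hK0 (H k)
    have hvM := (memLp_vec_iff hK0 hW HM.2.1).2 HM.2.2.2.1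
    have hvE : hvM.toLp _ = (2⁻¹ : ℝ) • (v n + v k) := by
      have e : (2⁻¹ : ℝ) • (v n + v k)
          = (((hv n).add (hv k)).const_smul (2⁻¹ : ℝ)).toLp
            ((2⁻¹ : ℝ) • (vec W K (hs n) + vec W K (hs k))) := rfl
      rw [e, MemLp.toLp_eq_toLp_iff, vec_midpoint]
    have hb := hle _ _ HM
    rw [HM.cost_eq hK0 hW hτ hvM, hvE, transport_midpoint, ht n, ht k,
      ← ENNReal.ofReal_add ENNReal.toReal_nonneg ENNReal.toReal_nonneg] at hb
    have e2 : (2⁻¹ : ℝ≥0∞) = ENNReal.ofReal 2⁻¹ := by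
      rw [ENNReal.ofReal_inv_of_pos two_pos, ENNReal.ofReal_ofNat]
    have hn : 0 ≤ t n := ENNReal.toReal_nonneg
    have hk : 0 ≤ t k := ENNReal.toReal_nonneg
    rw [e2, ← ENNReal.ofReal_mul (by norm_num),
      ← ENNReal.ofReal_add (mul_nonneg (by norm_num) (add_nonneg hn hk)) (hsq _)] at hb
    have hb' := ENNReal.toReal_le_of_le_ofReal
      (add_nonneg (mul_nonneg (by norm_num) (add_nonneg hn hk)) (hsq _)) hb
    linarith
  obtain ⟨v', hv'⟩ := cauchySeq_tendsto_of_complete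
    (cauchySeq_of_midpoint (by positivity : 0 < τ / 4) hlim hmid)
  -- The weighted fields converge almost everywhere along a subsequence.
  obtain ⟨ns, hns, hae⟩ := (tendstoInMeasure_of_tendsto_Lp hv').exists_seq_tendsto_ae
  have hae' : ∀ᵐ x, Tendsto (fun n => vec W K (hs (ns n)) x) atTop (𝓝 (v' x)) := by
    filter_upwards [hae, ae_all_iff.2 fun n => (hv n).coeFn_toLp] with x hx hx'
    exact hx.congr fun n => hx' (ns n)
  -- The plans converge weakly along an ultrafilter finer than `atTop`.
  let γF : ℕ → G → FiniteMeasure (Ed d × Ed d) := fun n g =>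
    ⟨γs (ns n) g, (H (ns n)).isFiniteMeasure g⟩
  let U : Ultrafilter ℕ := Ultrafilter.of atTop
  have hU : (U : Filter ℕ) ≤ atTop := Ultrafilter.of_le atTop
  choose γ' hγ' using fun g => exists_tendsto_of_marginals (fiber μ g) (totalMass σ)
    (fun n => γF n g) (fun n => (H (ns n)).1 g)
    (fun n => (H (ns n)).snd_le_totalMass hτ hW hKsym g) U
  have HO : InADM τ W K μ σ (fun g => (γ' g : Measure (Ed d × Ed d))) (unvec W K v') :=
    InADM.of_tendsto hτ hW hK0 hKsym (γs := γF) (fun n => H (ns n)) hU hγ'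
      (Lp.stronglyMeasurable v').measurable (Lp.memLp v') hae'
  refine ⟨_, _, HO, le_antisymm ?_ (hle _ _ HO)⟩
  have hvO := (memLp_vec_iff hK0 hW HO.2.1).2 HO.2.2.2.1
  have hvE : hvO.toLp _ = v' := by
    refine Lp.ext (hvO.coeFn_toLp.trans ?_)
    filter_upwards [hae'] with x hx
    exact vec_unvec_of_tendsto hKsym (fun n => (H (ns n)).2.2.1) hx
  rw [HO.cost_eq hK0 hW hτ hvO, hvE]
  -- The transport part of the cost converges too, since the total and the exchange part do.
  have htlim : Tendsto t atTop (𝓝 ((ACost τ W K μ σ).toReal - τ / 4 * ‖v'‖ ^ 2)) :=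
    (hlim.sub ((hv'.norm.pow 2).const_mul (τ / 4))).congr fun n => by ring
  have ht0 : 0 ≤ (ACost τ W K μ σ).toReal - τ / 4 * ‖v'‖ ^ 2 :=
    ge_of_tendsto' htlim fun n => ENNReal.toReal_nonneg
  have hT := transport_le_of_tendsto (τ := τ) hγ' (t := ENNReal.ofReal
      ((ACost τ W K μ σ).toReal - τ / 4 * ‖v'‖ ^ 2)) <| by
    refine ((ENNReal.tendsto_ofReal (htlim.comp hns.tendsto_atTop)).mono_left hU).congr fun n => ?_
    exact (ht (ns n)).symm
  refine (add_le_add_left hT _).trans ?_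
  rw [← ENNReal.ofReal_add ht0 (hsq _), sub_add_cancel, ENNReal.ofReal_toReal hfin.ne]
end

section
/- Let μ, σ ∈ P_2(ℝ^d × G) be absolutely continuous with respect to dx⊗dg and assume the density f̃ of σ satisfies Σ_g ∫ |f̃(x,g)|² e^{W(x)} dx < ∞. Then A^{G,W,τ}(μ,σ) < ∞. -/
/-!
Mass is first sent to the correct spatial distribution, and then redistributed along the graph.

Let `s = Σ_g σ_g` be the spatial marginal of `σ` and `a_g = μ_g(ℝ^d)`, so that `Σ_g a_g = 1`. The
product plans `γ_g = μ_g ⊗ s` have first marginals `μ_g`, second marginals `a_g s`, and finite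
quadratic cost because `μ` and `σ` have finite second moments. The balance condition then asks for
an antisymmetric `h` with
`Σ_{g'} h_{gg'}(x) K(g,g') = (e^{W(x)} / τ) (a_g Σ_v f̃(x,v) - f̃(x,g))`.
Since `(G, K)` is connected, `exists_unit_flow` gives for every `u, v` a flow `H^{uv}` on `G` with
divergence `δ_u - δ_v`; averaging over `u` with weights `a_u` gives flows `c^v` with divergence
`a - δ_v` (`exists_averaged_flow`). Then `h = (e^W / τ) Σ_v f̃(·,v) c^v` solves the equation, and
`h² e^{-W}` is bounded by a multiple of `Σ_v f̃(·,v)² e^W`, which is integrable by hypothesis.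
-/

open MeasureTheory ENNReal Filter
open scoped RealInnerProductSpace Classical

open MeasureTheory ENNReal

/-- In a connected weighted graph, a unit of mass can be moved between any two vertices by an
antisymmetric flow. -/
lemma exists_unit_flow {G : Type*} [Fintype G] (K : G → G → ℝ)
    (hKsym : ∀ g g', K g g' = K g' g) (u v : G)
    (huv : Relation.ReflTransGen (fun a b => 0 < K a b) u v) :
    ∃ H : G → G → ℝ, (∀ g g', H g g' = - H g' g) ∧
      ∀ g, ∑ g', H g g' * K g g' = (if g = u then 1 else 0) - (if g = v then 1 else 0) := by
  induction huv with
  | refl => exact ⟨fun _ _ => 0, by simp, by simp⟩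
  | @tail b c _ hbc ih =>
    obtain ⟨H, hanti, hdiv⟩ := ih
    -- Add the flow through the edge `(b, c)`; the two terms cancel if `b = c`.
    refine ⟨fun g g' => H g g' + ((if g = b then 1 else 0) * (if g' = c then 1 else 0)
      - (if g = c then 1 else 0) * (if g' = b then 1 else 0)) / K b c, ?_, ?_⟩
    · intro g g'
      simp only [hanti g g']
      ring
    · intro g
      have hK : K b c ≠ 0 := hbc.ne'
      have key : ∑ g', ((if g = b then (1 : ℝ) else 0) * (if g' = c then 1 else 0)
          - (if g = c then 1 else 0) * (if g' = b then 1 else 0)) / K b c * K g g'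
          = (if g = b then 1 else 0) - (if g = c then 1 else 0) := by
        have : ∀ g', ((if g = b then (1 : ℝ) else 0) * (if g' = c then 1 else 0)
            - (if g = c then 1 else 0) * (if g' = b then 1 else 0)) / K b c * K g g'
            = (if g' = c then (if g = b then 1 else 0) / K b c * K g g' else 0)
              - (if g' = b then (if g = c then 1 else 0) / K b c * K g g' else 0) := by
          intro g'
          split_ifs <;> ring
        simp only [this, Finset.sum_sub_distrib, Finset.sum_ite_eq', Finset.mem_univ, if_true]
        congr 1
        · split_ifs with h
          · subst h; field_simp
          · simp
        · split_ifs with h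
          · subst h; rw [hKsym g b]; field_simp
          · simp
      simp only [add_mul, Finset.sum_add_distrib]
      rw [key, hdiv g]
      ring

/-- For a probability vector `a`, there are antisymmetric flows with divergence `a - δ_v`. -/
lemma exists_averaged_flow {G : Type*} [Fintype G] (K : G → G → ℝ)
    (hKsym : ∀ g g', K g g' = K g' g)
    (hconn : ∀ g g' : G, Relation.ReflTransGen (fun a b => 0 < K a b) g g')
    (a : G → ℝ) (ha : ∑ g, a g = 1) :
    ∃ c : G → G → G → ℝ, (∀ v g g', c v g g' = - c v g' g) ∧
      ∀ v g, ∑ g', c v g g' * K g g' = a g - (if g = v then 1 else 0) := by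
  choose H hanti hdiv using fun u v => exists_unit_flow K hKsym u v (hconn u v)
  refine ⟨fun v g g' => ∑ u, a u * H u v g g', ?_, ?_⟩
  · intro v g g'
    rw [← Finset.sum_neg_distrib]
    refine Finset.sum_congr rfl fun u _ => ?_
    rw [hanti u v g g']
    ring
  · intro v g
    calc ∑ g', (∑ u, a u * H u v g g') * K g g'
        = ∑ u, a u * ∑ g', H u v g g' * K g g' := by
          simp only [Finset.sum_mul, Finset.mul_sum]
          rw [Finset.sum_comm]
          simp only [mul_assoc]
      _ = a g - (if g = v then 1 else 0) := by
          simp only [hdiv, mul_sub, Finset.sum_sub_distrib, ← Finset.sum_mul, ha]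
          simp

lemma fiber_apply {d : ℕ} {G : Type*} [MeasurableSpace G] [MeasurableSingletonClass G]
    (μ : Measure (Ed d × G)) (g : G) {A : Set (Ed d)} (hA : MeasurableSet A) :
    fiber μ g A = μ (A ×ˢ {g}) := by
  rw [fiber, Measure.map_apply measurable_fst hA, Measure.restrict_apply (measurable_fst hA)]
  rfl

lemma sum_fiber_apply {d : ℕ} {G : Type*} [Fintype G] [MeasurableSpace G]
    [MeasurableSingletonClass G] (μ : Measure (Ed d × G)) {A : Set (Ed d)}
    (hA : MeasurableSet A) :
    ∑ g, fiber μ g A = μ.map Prod.fst A := by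
  have h := sum_measure_preimage_singleton (μ := μ.restrict (Prod.fst ⁻¹' A))
    (f := (Prod.snd : Ed d × G → G)) Finset.univ
    (fun y _ => measurable_snd (measurableSet_singleton y))
  simp only [Finset.coe_univ, Set.preimage_univ, Measure.restrict_apply_univ] at h
  rw [Measure.map_apply measurable_fst hA, ← h]
  refine Finset.sum_congr rfl fun g _ => ?_
  rw [fiber_apply μ g hA, Measure.restrict_apply (measurable_snd (measurableSet_singleton g))]
  congr 1
  ext p
  simp [and_comm]

lemma HasDens.measurable_section {d : ℕ} {G : Type*} [Fintype G] [MeasurableSpace G]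
    {σ : Measure (Ed d × G)} {f : Ed d → G → ℝ} (hf : HasDens σ f) (g : G) :
    Measurable (fun x => f x g) :=
  hf.2.1.comp (measurable_id.prodMk measurable_const)

lemma HasDens.fiber_apply {d : ℕ} {G : Type*} [Fintype G] [MeasurableSpace G]
    [MeasurableSingletonClass G]
    {σ : Measure (Ed d × G)} {f : Ed d → G → ℝ} (hf : HasDens σ f) (g : G)
    {A : Set (Ed d)} (hA : MeasurableSet A) :
    fiber σ g A = ∫⁻ x in A, ENNReal.ofReal (f x g) := by
  have hm : Measurable fun p : Ed d × G => ENNReal.ofReal (f p.1 p.2) := hf.2.1.ennreal_ofReal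
  rw [_root_.fiber_apply σ g hA, hf.2.2,
    withDensity_apply _ (hA.prod (measurableSet_singleton g)), refM, ← Measure.prod_restrict,
    Measure.restrict_singleton, Measure.count_singleton, one_smul, lintegral_prod _ hm.aemeasurable]
  simp

lemma lintegral_sq_norm_sub_prod_lt_top {E : Type*} [NormedAddCommGroup E] [MeasurableSpace E]
    [BorelSpace E] [SecondCountableTopology E] (ν s : Measure E) [IsFiniteMeasure ν]
    [IsFiniteMeasure s]
    (hν : ∫⁻ x, ENNReal.ofReal (‖x‖ ^ 2) ∂ν < ⊤) (hs : ∫⁻ x, ENNReal.ofReal (‖x‖ ^ 2) ∂s < ⊤) :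
    ∫⁻ p : E × E, ENNReal.ofReal (‖p.1 - p.2‖ ^ 2) ∂(ν.prod s) < ⊤ := by
  have hm : Measurable fun x : E => ENNReal.ofReal (‖x‖ ^ 2) :=
    (measurable_norm.pow_const 2).ennreal_ofReal
  have hm1 : Measurable fun p : E × E => ENNReal.ofReal (‖p.1‖ ^ 2) := hm.comp measurable_fst
  have hm2 : Measurable fun p : E × E => ENNReal.ofReal (‖p.2‖ ^ 2) := hm.comp measurable_snd
  have hle : ∀ p : E × E, ENNReal.ofReal (‖p.1 - p.2‖ ^ 2)
      ≤ 2 * ENNReal.ofReal (‖p.1‖ ^ 2) + 2 * ENNReal.ofReal (‖p.2‖ ^ 2) := by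
    intro p
    rw [← ENNReal.ofReal_ofNat 2, ← ENNReal.ofReal_mul (by norm_num),
      ← ENNReal.ofReal_mul (by norm_num), ← ENNReal.ofReal_add (by positivity) (by positivity)]
    apply ENNReal.ofReal_le_ofReal
    nlinarith [norm_sub_le p.1 p.2, norm_nonneg (p.1 - p.2), sq_nonneg (‖p.1‖ - ‖p.2‖)]
  refine (lintegral_mono hle).trans_lt ?_
  have h1 : ∫⁻ p : E × E, 2 * ENNReal.ofReal (‖p.1‖ ^ 2) ∂(ν.prod s) < ⊤ := by
    rw [lintegral_const_mul _ hm1,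
      lintegral_prod _ hm1.aemeasurable]
    simp only [lintegral_const]
    rw [lintegral_mul_const _ hm]
    exact ENNReal.mul_lt_top (by simp) (ENNReal.mul_lt_top hν (measure_lt_top _ _))
  have h2 : ∫⁻ p : E × E, 2 * ENNReal.ofReal (‖p.2‖ ^ 2) ∂(ν.prod s) < ⊤ := by
    rw [lintegral_const_mul _ hm2,
      lintegral_prod _ hm2.aemeasurable]
    simp only [lintegral_const]
    exact ENNReal.mul_lt_top (by simp) (ENNReal.mul_lt_top hs (measure_lt_top _ _))
  rw [lintegral_add_left (hm1.const_mul 2)]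
  exact ENNReal.add_lt_top.2 ⟨h1, h2⟩

/-- The square integrability of the graph flow `h = (e^W / τ) Σ_v f(·,v) c_v` against
`e^{-W}`. -/
lemma lintegral_flow_lt_top {d : ℕ} {G : Type*} [Fintype G] (τ : ℝ) (W : Ed d → ℝ)
    (hW : Measurable W) (f : Ed d → G → ℝ) (hf : ∀ g, Measurable fun x => f x g)
    (hL2W : ∑ g, ∫⁻ x, ENNReal.ofReal ((f x g) ^ 2 * Real.exp (W x)) < ⊤)
    (c : G → ℝ) (k : ℝ) (hk : 0 ≤ k) :
    ∫⁻ x, ENNReal.ofReal ((Real.exp (W x) / τ * ∑ v, f x v * c v) ^ 2 * Real.exp (-W x) * k)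
      < ⊤ := by
  have hle : ∀ x, ENNReal.ofReal
      ((Real.exp (W x) / τ * ∑ v, f x v * c v) ^ 2 * Real.exp (-W x) * k)
      ≤ ENNReal.ofReal ((∑ v, c v ^ 2) * k / τ ^ 2)
        * ∑ v, ENNReal.ofReal ((f x v) ^ 2 * Real.exp (W x)) := by
    intro x
    have hC : 0 ≤ (∑ v, c v ^ 2) * k / τ ^ 2 :=
      div_nonneg (mul_nonneg (Finset.sum_nonneg fun _ _ => sq_nonneg _) hk) (sq_nonneg _)
    rw [← ENNReal.ofReal_sum_of_nonneg (fun v _ => by positivity), ← ENNReal.ofReal_mul hC]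
    apply ENNReal.ofReal_le_ofReal
    have hcs := Finset.sum_mul_sq_le_sq_mul_sq Finset.univ (fun v => f x v) c
    have he : Real.exp (W x) * Real.exp (-W x) = 1 := by rw [← Real.exp_add]; simp
    calc (Real.exp (W x) / τ * ∑ v, f x v * c v) ^ 2 * Real.exp (-W x) * k
        = (∑ v, f x v * c v) ^ 2 * (Real.exp (W x) * k / τ ^ 2)
            * (Real.exp (W x) * Real.exp (-W x)) := by ring
      _ = (∑ v, f x v * c v) ^ 2 * (Real.exp (W x) * k / τ ^ 2) := by rw [he, mul_one]
      _ ≤ ((∑ v, f x v ^ 2) * ∑ v, c v ^ 2) * (Real.exp (W x) * k / τ ^ 2) :=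
          mul_le_mul_of_nonneg_right hcs (by positivity)
      _ = (∑ v, c v ^ 2) * k / τ ^ 2 * ∑ v, f x v ^ 2 * Real.exp (W x) := by
          rw [← Finset.sum_mul]; ring
  refine (lintegral_mono hle).trans_lt ?_
  have hm : ∀ v, Measurable fun x => ENNReal.ofReal ((f x v) ^ 2 * Real.exp (W x)) := fun v =>
    (((hf v).pow_const 2).mul (Real.measurable_exp.comp hW)).ennreal_ofReal
  rw [lintegral_const_mul _ (Finset.measurable_sum _ fun v _ => hm v),
    lintegral_finsetSum _ fun v _ => hm v]
  exact ENNReal.mul_lt_top ENNReal.ofReal_lt_top hL2W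

/-- If `μ, σ ∈ P_2(ℝ^d × G)` are absolutely continuous with respect to `dx ⊗ dg` and the
density `f̃` of `σ` satisfies `Σ_g ∫ |f̃(x,g)|² e^{W(x)} dx < ∞`, then the static
semi-discrete transport cost `A^{G,W,τ}(μ,σ)` is finite. -/
theorem acost_finite_of_L2W {d : ℕ} {G : Type*} [Fintype G] [MeasurableSpace G]
    [MeasurableSingletonClass G]
    (τ : ℝ) (hτ : 0 < τ) (W : Ed d → ℝ) (hW : Measurable W) (K : G → G → ℝ)
    (hK0 : ∀ g g', 0 ≤ K g g') (hKsym : ∀ g g', K g g' = K g' g)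
    (hconn : ∀ g g' : G, Relation.ReflTransGen (fun a b => 0 < K a b) g g')
    (μ σ : Measure (Ed d × G)) (hμ : μ ∈ P2 d G) (hσ : σ ∈ P2 d G)
    (hμac : μ ≪ refM d G)
    (ftilde : Ed d → G → ℝ) (hσdens : HasDens σ ftilde)
    (hL2W : ∑ g, ∫⁻ x, ENNReal.ofReal ((ftilde x g) ^ 2 * Real.exp (W x)) < ⊤) :
    ACost τ W K μ σ < ⊤ := by
  have hμP : IsProbabilityMeasure μ := hμ.1
  have hσP : IsProbabilityMeasure σ := hσ.1
  have hfm := hσdens.measurable_section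
  set s : Measure (Ed d) := σ.map Prod.fst with hs
  have hsP : IsProbabilityMeasure s := Measure.isProbabilityMeasure_map measurable_fst.aemeasurable
  have hfib : ∀ g, IsFiniteMeasure (fiber μ g) := fun g => by unfold fiber; infer_instance
  have hfibσ : ∀ g, IsFiniteMeasure (fiber σ g) := fun g => by unfold fiber; infer_instance
  set a : G → ℝ := fun g => (fiber μ g Set.univ).toReal with ha_def
  have ha : ∑ g, a g = 1 := by
    rw [← ENNReal.toReal_sum fun g _ => measure_ne_top _ _, sum_fiber_apply μ MeasurableSet.univ,
      Measure.map_apply measurable_fst MeasurableSet.univ]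
    simp
  obtain ⟨c, hanti, hdiv⟩ := exists_averaged_flow K hKsym hconn a ha
  set h : Ed d → G → G → ℝ :=
    fun x g g' => Real.exp (W x) / τ * ∑ v, ftilde x v * c v g g' with hh
  have hcost : ∀ g g', ∫⁻ x, ENNReal.ofReal ((h x g g') ^ 2 * Real.exp (-W x) * K g g') < ⊤ :=
    fun g g' => lintegral_flow_lt_top τ W hW ftilde hfm hL2W (fun v => c v g g') _ (hK0 g g')
  have hm2 : Measurable fun x : Ed d => ENNReal.ofReal (‖x‖ ^ 2) :=
    (measurable_norm.pow_const 2).ennreal_ofReal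
  have hint : ∀ v, Integrable fun x => ftilde x v := by
    intro v
    refine ⟨(hfm v).aestronglyMeasurable, ?_⟩
    rw [hasFiniteIntegral_iff_ofReal (Eventually.of_forall fun x => hσdens.1 x v),
      ← setLIntegral_univ, ← hσdens.fiber_apply v MeasurableSet.univ]
    exact measure_lt_top _ _
  have hfibint : ∀ v (A : Set (Ed d)), MeasurableSet A →
      (fiber σ v A).toReal = ∫ x in A, ftilde x v := by
    intro v A hA
    rw [hσdens.fiber_apply v hA, integral_eq_lintegral_of_nonneg_ae
      (Eventually.of_forall fun x => hσdens.1 x v) (hfm v).aestronglyMeasurable]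
  -- The graph flow has the divergence required by the balance condition.
  have hflow : ∀ g x, (∑ g', h x g g' * K g g') * Real.exp (-W x)
      = τ⁻¹ * (a g * ∑ v, ftilde x v - ftilde x g) := by
    intro g x
    have he : Real.exp (W x) * Real.exp (-W x) = 1 := by rw [← Real.exp_add]; simp
    have h1 : ∑ g', h x g g' * K g g'
        = Real.exp (W x) / τ * ∑ v, ftilde x v * ∑ g', c v g g' * K g g' := by
      simp only [hh, Finset.mul_sum, Finset.sum_mul]
      rw [Finset.sum_comm]
      simp only [mul_assoc]
    have h2 : ∑ v, ftilde x v * ∑ g', c v g g' * K g g'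
        = a g * ∑ v, ftilde x v - ftilde x g := by
      simp only [hdiv, mul_sub, Finset.sum_sub_distrib, ← Finset.sum_mul]
      simp [mul_comm]
    rw [h1, h2]
    linear_combination τ⁻¹ * (a g * ∑ v, ftilde x v - ftilde x g) * he
  have hadm : InADM τ W K μ σ (fun g => (fiber μ g).prod s) h := by
    refine ⟨fun g => ?_, fun g g' => ?_, fun x g g' => ?_, ?_, fun g A hA => ?_⟩
    · rw [Measure.map_fst_prod, measure_univ, one_smul]
    · exact ((Real.measurable_exp.comp hW).div_const τ).mul
        (Finset.measurable_sum _ fun v _ => (hfm v).mul_const _)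
    · simp only [hh]
      rw [← mul_neg, ← Finset.sum_neg_distrib]
      congr 1
      refine Finset.sum_congr rfl fun v _ => ?_
      rw [hanti v g g']
      ring
    · exact ENNReal.sum_lt_top.2 fun g _ => ENNReal.sum_lt_top.2 fun g' _ => hcost g g'
    · have hsA : (s A).toReal = ∑ v, ∫ x in A, ftilde x v := by
        rw [hs, ← sum_fiber_apply σ hA, ENNReal.toReal_sum fun g _ => measure_ne_top _ _]
        exact Finset.sum_congr rfl fun v _ => hfibint v A hA
      simp only [hflow]
      rw [Measure.map_snd_prod, Measure.smul_apply, smul_eq_mul, ENNReal.toReal_mul, hsA,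
        hfibint g A hA, integral_const_mul, integral_sub
          ((integrable_finsetSum _ fun v _ => (hint v).integrableOn).const_mul _)
          (hint g).integrableOn,
        integral_const_mul, integral_finsetSum _ fun v _ => (hint v).integrableOn,
        mul_inv_cancel_left₀ hτ.ne']
      simp only [ha_def]
      ring
  have hmomμ : ∀ g, ∫⁻ x, ENNReal.ofReal (‖x‖ ^ 2) ∂(fiber μ g) < ⊤ := by
    intro g
    rw [fiber, lintegral_map hm2 measurable_fst]
    exact (setLIntegral_le_lintegral _ _).trans_lt hμ.2
  have hmoms : ∫⁻ x, ENNReal.ofReal (‖x‖ ^ 2) ∂s < ⊤ := by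
    rw [hs, lintegral_map hm2 measurable_fst]
    exact hσ.2
  have hinf : ACost τ W K μ σ ≤ Cost τ W K (fun g => (fiber μ g).prod s) h :=
    iInf_le_of_le _ (iInf_le_of_le h (iInf_le_of_le hadm le_rfl))
  refine hinf.trans_lt ?_
  refine ENNReal.sum_lt_top.2 fun g _ => ENNReal.sum_lt_top.2 fun g' _ => ENNReal.add_lt_top.2
    ⟨ENNReal.mul_lt_top ENNReal.ofReal_lt_top
      (lintegral_sq_norm_sub_prod_lt_top _ _ (hmomμ g) hmoms),
    ENNReal.mul_lt_top ENNReal.ofReal_lt_top ?_⟩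
  simpa only [mul_right_comm] using hcost g g'
end
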